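/- arXiv:2405.16752 — 9 statements merged into one kernel-verified Lean document; each statement's English description precedes it below -/
import Mathlib

section
/- Fix a model h : X → ℝ^d, a distribution D over X × ℝ^d, and a measurable set C ⊆ X with Pr_D[x ∈ C] > 0. Let Δ = E_D[y | x ∈ C] − E_D[h(x) | x ∈ C] ∈ ℝ^d, and define the patched model h'(x) = h(x) + Δ if x ∈ C and h'(x) = h(x) otherwise. Then E_D[‖h(x) − y‖₂²] − E_D[‖h'(x) − y‖₂²] = Pr_D[x ∈ C] · ‖Δ‖₂². -/
/-!
With residual `r = y - h(x)` and `S = {x ∈ C}`, expanding the square gives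
`‖r‖² - ‖r - 1_S Δ‖² = 1_S (2⟨Δ, r⟩ - ‖Δ‖²)` pointwise. Since `∫_S r = Pr[S] Δ` by the choice
of `Δ`, integrating yields `2 Pr[S] ‖Δ‖² - Pr[S] ‖Δ‖² = Pr[S] ‖Δ‖²`. Boundedness of `h` and `y`
makes every integrand integrable.
-/

open MeasureTheory ProbabilityTheory

/-- Monotone decrease of squared error: patching a model `h` on a positive-probability
set `C` by the conditional bias vector `Δ = E[y | x ∈ C] − E[h(x) | x ∈ C]` decreases the
expected squared Euclidean error by exactly `Pr[x ∈ C] · ‖Δ‖₂²`. -/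
theorem monotone_decrease_of_squared_error
    {X : Type*} [MeasurableSpace X] {d : ℕ}
    (D : Measure (X × (Fin d → ℝ))) [IsProbabilityMeasure D]
    (h : X → Fin d → ℝ) (hmeas : Measurable h)
    (M : ℝ) (hhbd : ∀ x, ‖h x‖ ≤ M) (hybd : ∀ᵐ p ∂D, ‖p.2‖ ≤ M)
    (C : Set X) (hCmeas : MeasurableSet C)
    (hCpos : 0 < (D {p | p.1 ∈ C}).toReal)
    (Δ : Fin d → ℝ)
    (hΔ : Δ = (∫ p, p.2 ∂(D[|{p : X × (Fin d → ℝ) | p.1 ∈ C}]))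
              - (∫ p, h p.1 ∂(D[|{p : X × (Fin d → ℝ) | p.1 ∈ C}])))
    (h' : X → Fin d → ℝ)
    (hh' : ∀ x, h' x = h x + C.indicator (fun _ => Δ) x) :
    (∫ p, (∑ i, (h p.1 i - p.2 i) ^ 2) ∂D) - (∫ p, (∑ i, (h' p.1 i - p.2 i) ^ 2) ∂D)
      = (D {p | p.1 ∈ C}).toReal * (∑ i, (Δ i) ^ 2) := by
  set S : Set (X × (Fin d → ℝ)) := {p | p.1 ∈ C} with hS
  have hSm : MeasurableSet S := measurable_fst hCmeas
  have hyi : Integrable (fun p : X × (Fin d → ℝ) => p.2) D :=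
    Integrable.of_bound measurable_snd.aestronglyMeasurable M hybd
  have hhi : Integrable (fun p : X × (Fin d → ℝ) => h p.1) D :=
    Integrable.of_bound (hmeas.comp measurable_fst).aestronglyMeasurable M
      (Filter.Eventually.of_forall fun p => hhbd p.1)
  have hri : ∀ i, Integrable (fun p : X × (Fin d → ℝ) => p.2 i - h p.1 i) D :=
    fun i => (hyi.eval i).sub (hhi.eval i)
  have hmean : ∀ i, ∫ p in S, (p.2 i - h p.1 i) ∂D = (D S).toReal * Δ i := by
    intro i
    have h1 : ∫ p in S, (p.2 - h p.1) ∂D = (D S).toReal • Δ := by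
      rw [integral_sub hyi.restrict hhi.restrict, hΔ, ProbabilityTheory.cond,
        integral_smul_measure, integral_smul_measure, ← smul_sub, smul_smul,
        ENNReal.toReal_inv, mul_inv_cancel₀ hCpos.ne', one_smul]
    have h2 := congrFun h1 i
    exact (eval_integral (fun j => (hri j).restrict) i).symm.trans h2
  have hf : Integrable (fun p : X × (Fin d → ℝ) => ∑ i, (h p.1 i - p.2 i) ^ 2) D := by
    refine integrable_finsetSum _ fun i _ => ?_
    refine Integrable.of_bound (C := (M + M) ^ 2) ?_ ?_
    · exact (by fun_prop : Measurable fun p : X × (Fin d → ℝ) =>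
        (h p.1 i - p.2 i) ^ 2).aestronglyMeasurable
    · filter_upwards [hybd] with p hp
      rw [norm_pow]
      gcongr
      exact (norm_sub_le _ _).trans
        (add_le_add ((norm_le_pi_norm _ i).trans (hhbd p.1)) ((norm_le_pi_norm _ i).trans hp))
  have hGi : ∀ i, Integrable (fun p : X × (Fin d → ℝ) =>
      2 * Δ i * (p.2 i - h p.1 i) - Δ i ^ 2) D :=
    fun i => ((hri i).const_mul _).sub (integrable_const _)
  have hG : Integrable (S.indicator fun p : X × (Fin d → ℝ) =>
      ∑ i, (2 * Δ i * (p.2 i - h p.1 i) - Δ i ^ 2)) D :=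
    (integrable_finsetSum _ fun i _ => hGi i).indicator hSm
  have hpt : (fun p : X × (Fin d → ℝ) => ∑ i, (h' p.1 i - p.2 i) ^ 2) =
      fun p => (∑ i, (h p.1 i - p.2 i) ^ 2) - S.indicator (fun p : X × (Fin d → ℝ) =>
        ∑ i, (2 * Δ i * (p.2 i - h p.1 i) - Δ i ^ 2)) p := by
    funext p
    by_cases hp : p.1 ∈ C
    · have hpS : p ∈ S := hp
      rw [Set.indicator_of_mem hpS, ← Finset.sum_sub_distrib]
      refine Finset.sum_congr rfl fun i _ => ?_
      rw [hh', Set.indicator_of_mem hp, Pi.add_apply]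
      ring
    · have hpS : p ∉ S := hp
      simp [hh', hp, hpS]
  rw [hpt, integral_sub hf hG, sub_sub_cancel, integral_indicator hSm,
    integral_finsetSum _ fun i _ => (hGi i).restrict, Finset.mul_sum]
  refine Finset.sum_congr rfl fun i _ => ?_
  rw [integral_sub ((hri i).restrict.const_mul _) (integrable_const _), integral_const_mul,
    hmean, setIntegral_const, smul_eq_mul, measureReal_def]
  ring
end

section
/- Fix a model h : X → ℝ^d, a distribution D over X × ℝ^d, a tolerance α > 0, and a measurable set C ⊆ X with Pr_D[x ∈ C] > 0 such that Pr_D[x ∈ C] · ‖E_D[y − h(x) | x ∈ C]‖_∞ > α. Let Δ = E_D[y − h(x) | x ∈ C] and define h'(x) = h(x) + Δ for x ∈ C and h'(x) = h(x) otherwise. Then E_D[‖h(x) − y‖₂²] − E_D[‖h'(x) − y‖₂²] > α², i.e., each bias-correction step decreases the expected squared error by more than α². -/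
/-!
On `S = {x ∈ C}` the residual changes from `y - h` to `y - h - Δ`, and off `S` nothing changes, so
the squared error decreases pointwise by `1_S ∑ i, (2 Δ i (y i - h i) - (Δ i)²)`. Since `Δ` is the
conditional mean of `y - h` on `S`, `∫_S (y i - h i) = Pr[S] Δ i`, and the expected decrease is
exactly `Pr[S] ‖Δ‖₂²`. This is at least `Pr[S] ‖Δ‖_∞² ≥ (Pr[S] ‖Δ‖_∞)² > α²`, as `Pr[S] ≤ 1`.
-/

open MeasureTheory ProbabilityTheory

/-- If the model `h` has conditional bias exceeding the tolerance `α` on a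
positive-probability set `C`, in the sense that
`Pr[x ∈ C] · ‖E[y − h(x) | x ∈ C]‖_∞ > α`, then patching `h` on `C` by the conditional
bias vector `Δ = E[y − h(x) | x ∈ C]` decreases the expected squared Euclidean error by
more than `α²`. -/
theorem bias_correction_decreases_squared_error
    {X : Type*} [MeasurableSpace X] {d : ℕ}
    (D : Measure (X × (Fin d → ℝ))) [IsProbabilityMeasure D]
    (h : X → Fin d → ℝ) (hmeas : Measurable h)
    (M : ℝ) (hhbd : ∀ x, ‖h x‖ ≤ M) (hybd : ∀ᵐ p ∂D, ‖p.2‖ ≤ M)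
    (α : ℝ) (hα : 0 < α)
    (C : Set X) (hCmeas : MeasurableSet C)
    (hCpos : 0 < (D {p | p.1 ∈ C}).toReal)
    (Δ : Fin d → ℝ)
    (hΔ : Δ = ∫ p, (p.2 - h p.1) ∂(D[|{p : X × (Fin d → ℝ) | p.1 ∈ C}]))
    (hbias : α < (D {p | p.1 ∈ C}).toReal * ‖Δ‖)
    (h' : X → Fin d → ℝ)
    (hh' : ∀ x, h' x = h x + C.indicator (fun _ => Δ) x) :
    α ^ 2 < (∫ p, (∑ i, (h p.1 i - p.2 i) ^ 2) ∂D)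
              - (∫ p, (∑ i, (h' p.1 i - p.2 i) ^ 2) ∂D) := by
  set S : Set (X × (Fin d → ℝ)) := {p | p.1 ∈ C} with hS
  set P : ℝ := (D S).toReal with hP
  have hSm : MeasurableSet S := measurable_fst hCmeas
  have hP1 : P ≤ 1 := by
    have := measureReal_le_one (μ := D) (s := S)
    simpa [Measure.real] using this
  have hres_meas : Measurable (fun p : X × (Fin d → ℝ) => p.2 - h p.1) :=
    measurable_snd.sub (hmeas.comp measurable_fst)
  have hres_bd : ∀ᵐ p ∂D, ‖p.2 - h p.1‖ ≤ M + M := by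
    filter_upwards [hybd] with p hp
    exact (norm_sub_le _ _).trans (add_le_add hp (hhbd _))
  have hres_int : Integrable (fun p : X × (Fin d → ℝ) => p.2 - h p.1) D :=
    Integrable.of_bound hres_meas.aestronglyMeasurable (M + M) hres_bd
  have hcoord_int : ∀ i, Integrable (fun p : X × (Fin d → ℝ) => p.2 i - h p.1 i) D := fun i =>
    hres_int.eval i
  have hmean : ∀ i, ∫ p in S, (p.2 i - h p.1 i) ∂D = P * Δ i := by
    intro i
    have hvec : Δ = P⁻¹ • ∫ p in S, (p.2 - h p.1) ∂D := by
      rw [hΔ, ProbabilityTheory.cond, integral_smul_measure, ENNReal.toReal_inv]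
    have hi : (∫ p in S, (p.2 - h p.1) ∂D) i = ∫ p in S, (p.2 i - h p.1 i) ∂D :=
      eval_integral (fun j => (hcoord_int j).integrableOn) i
    have := congrFun hvec i
    rw [Pi.smul_apply, hi, smul_eq_mul] at this
    rw [this, mul_inv_cancel_left₀ hCpos.ne']
  have hsq_int : Integrable (fun p : X × (Fin d → ℝ) => ∑ i, (h p.1 i - p.2 i) ^ 2) D := by
    refine integrable_finsetSum _ fun i _ => ?_
    refine Integrable.of_bound (C := (M + M) ^ 2) ?_ ?_
    · have hm : Measurable (fun p : X × (Fin d → ℝ) => h p.1 i - p.2 i) :=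
        ((measurable_pi_apply i).comp (hmeas.comp measurable_fst)).sub
          ((measurable_pi_apply i).comp measurable_snd)
      exact (hm.pow_const 2).aestronglyMeasurable
    · filter_upwards [hres_bd] with p hp
      have h1 : |p.2 i - h p.1 i| ≤ M + M := (norm_le_pi_norm (p.2 - h p.1) i).trans hp
      rw [norm_pow, Real.norm_eq_abs, abs_sub_comm]
      gcongr
  have hterm_int : ∀ i, Integrable
      (fun p : X × (Fin d → ℝ) => 2 * Δ i * (p.2 i - h p.1 i) - Δ i ^ 2) D := fun i =>
    ((hcoord_int i).const_mul _).sub (integrable_const _)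
  let g : X × (Fin d → ℝ) → ℝ := fun p => ∑ i, (2 * Δ i * (p.2 i - h p.1 i) - Δ i ^ 2)
  have hg_int : Integrable g D := integrable_finsetSum _ fun i _ => hterm_int i
  have hpoint : ∀ p : X × (Fin d → ℝ),
      ∑ i, (h' p.1 i - p.2 i) ^ 2 = ∑ i, (h p.1 i - p.2 i) ^ 2 - S.indicator g p := by
    intro p
    by_cases hp : p.1 ∈ C
    · have hpS : p ∈ S := hp
      rw [Set.indicator_of_mem hpS, ← Finset.sum_sub_distrib]
      refine Finset.sum_congr rfl fun i _ => ?_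
      rw [hh', Set.indicator_of_mem hp, Pi.add_apply]
      ring
    · have hpS : p ∉ S := hp
      rw [Set.indicator_of_notMem hpS, sub_zero, hh', Set.indicator_of_notMem hp, add_zero]
  have hg_val : ∫ p in S, g p ∂D = P * ∑ i, Δ i ^ 2 := by
    rw [integral_finsetSum _ fun i _ => (hterm_int i).integrableOn, Finset.mul_sum]
    refine Finset.sum_congr rfl fun i _ => ?_
    rw [integral_sub ((hcoord_int i).const_mul _).integrableOn (integrable_const _),
      integral_const_mul, hmean, setIntegral_const, smul_eq_mul, Measure.real, ← hP]
    ring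
  have hgoal : (∫ p, (∑ i, (h p.1 i - p.2 i) ^ 2) ∂D)
      - (∫ p, (∑ i, (h' p.1 i - p.2 i) ^ 2) ∂D) = P * ∑ i, Δ i ^ 2 := by
    simp_rw [hpoint]
    rw [integral_sub hsq_int (hg_int.indicator hSm), integral_indicator hSm, hg_val]
    ring
  rw [hgoal]
  have hnorm : ‖Δ‖ ^ 2 ≤ ∑ i, Δ i ^ 2 := by
    have hsum : 0 ≤ ∑ i, Δ i ^ 2 := Finset.sum_nonneg fun i _ => sq_nonneg _
    have : ‖Δ‖ ≤ √(∑ i, Δ i ^ 2) := by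
      refine (pi_norm_le_iff_of_nonneg (Real.sqrt_nonneg _)).2 fun i => ?_
      refine Real.abs_le_sqrt ?_
      exact Finset.single_le_sum (f := fun j => Δ j ^ 2) (fun j _ => sq_nonneg _)
        (Finset.mem_univ i)
    exact (Real.le_sqrt (norm_nonneg _) hsum).1 this
  calc α ^ 2 < (P * ‖Δ‖) ^ 2 := by gcongr
    _ = P * (P * ‖Δ‖ ^ 2) := by ring
    _ ≤ P * (1 * ‖Δ‖ ^ 2) := by gcongr
    _ ≤ P * ∑ i, Δ i ^ 2 := by rw [one_mul]; gcongr
end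

section
/- Let D be a distribution over X × ℝ^d with y ∈ [0, M]^d almost surely, and let α > 0. Suppose h^0 : X → [0, M]^d is a model and for each t = 0, 1, …, T − 1 there exists a measurable set C_t ⊆ X with Pr_D[x ∈ C_t] > 0 such that Pr_D[x ∈ C_t] · ‖E_D[y − h^t(x) | x ∈ C_t]‖_∞ > α, and h^{t+1}(x) = h^t(x) + Δ_t · 1[x ∈ C_t] where Δ_t = E_D[y − h^t(x) | x ∈ C_t]. Then T ≤ d·M²/α². In particular, the Update debiasing procedure, run with any (possibly adaptively chosen) sequence of conditioning events, terminates within d·M²/α² rounds. -/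
/-!
The squared loss `sqLoss D g = ∑ i, ∫ (y i - g x i)²` is a potential for the procedure. Shifting
`g` on `C` by the conditional bias `Δ` lowers the loss by exactly `Pr[C] * ∑ i, (Δ i)²`
(`sqLoss_shift`). This is at least `Pr[C] * ‖Δ‖_∞² ≥ (Pr[C] * ‖Δ‖_∞)² > α²`, because
`Pr[C] ≤ 1`. The loss is at most `d * M²` at the start and never negative, so there are at most
`d * M² / α²` rounds. Boundedness and measurability of the iterates, needed for all integrals to
be meaningful, persist along the iteration.
-/

open MeasureTheory ProbabilityTheory

/-- The expected squared Euclidean distance between the label and the prediction of `g`. -/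
noncomputable def sqLoss {X : Type*} [MeasurableSpace X] {d : ℕ}
    (D : Measure (X × (Fin d → ℝ))) (g : X → Fin d → ℝ) : ℝ :=
  ∑ i, ∫ p, (p.2 i - g p.1 i) ^ 2 ∂D

/-- Shifting a square-integrable real function on `S` by its conditional mean `m` lowers the
second moment by `μ S * m²`. -/
lemma integral_sq_sub_indicator {Ω : Type*} [MeasurableSpace Ω] (μ : Measure Ω)
    [IsProbabilityMeasure μ] {S : Set Ω} (hS : MeasurableSet S) (r : Ω → ℝ)
    (hr : Integrable r μ) (hr2 : Integrable (fun p => r p ^ 2) μ) (m : ℝ)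
    (hm : ∫ p in S, r p ∂μ = μ.real S * m) :
    ∫ p, (r p - S.indicator (fun _ => m) p) ^ 2 ∂μ = (∫ p, r p ^ 2 ∂μ) - μ.real S * m ^ 2 := by
  have e : (fun p => (r p - S.indicator (fun _ => m) p) ^ 2)
      = fun p => r p ^ 2 - S.indicator (fun p => 2 * m * r p - m ^ 2) p := by
    funext p
    by_cases hp : p ∈ S
    · simp only [Set.indicator_of_mem hp]; ring
    · simp only [Set.indicator_of_notMem hp]; ring
  have hi : Integrable (fun p => 2 * m * r p - m ^ 2) μ :=
    (hr.const_mul _).sub (integrable_const _)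
  rw [e, integral_sub hr2 (hi.indicator hS), integral_indicator hS,
    integral_sub (hr.const_mul _).integrableOn (integrable_const _), integral_const_mul, hm,
    setIntegral_const, smul_eq_mul]
  ring

section Step

variable {X : Type*} [MeasurableSpace X] {d : ℕ} (D : Measure (X × (Fin d → ℝ)))

lemma ae_abs_residual_le {M B : ℝ} (hybd : ∀ᵐ p ∂D, ∀ i, p.2 i ∈ Set.Icc (0 : ℝ) M)
    {g : X → Fin d → ℝ} (hB : ∀ x i, |g x i| ≤ B) (i : Fin d) :
    ∀ᵐ p ∂D, |p.2 i - g p.1 i| ≤ M + B := by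
  filter_upwards [hybd] with p hp
  have h1 := hp i
  have h2 := abs_le.1 (hB p.1 i)
  rw [abs_le]
  constructor <;> linarith [h1.1, h1.2]

lemma measurable_residual {g : X → Fin d → ℝ} (hg : Measurable g) (i : Fin d) :
    Measurable fun p : X × (Fin d → ℝ) => p.2 i - g p.1 i := by
  have : Measurable fun x => g x i := (measurable_pi_apply i).comp hg
  fun_prop

variable [IsProbabilityMeasure D]

lemma integrable_residual {M B : ℝ} (hybd : ∀ᵐ p ∂D, ∀ i, p.2 i ∈ Set.Icc (0 : ℝ) M)
    {g : X → Fin d → ℝ} (hg : Measurable g) (hB : ∀ x i, |g x i| ≤ B) (i : Fin d) :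
    Integrable (fun p => p.2 i - g p.1 i) D :=
  Integrable.of_bound (measurable_residual hg i).aestronglyMeasurable (M + B)
    (ae_abs_residual_le D hybd hB i)

lemma integrable_residual_sq {M B : ℝ} (hybd : ∀ᵐ p ∂D, ∀ i, p.2 i ∈ Set.Icc (0 : ℝ) M)
    {g : X → Fin d → ℝ} (hg : Measurable g) (hB : ∀ x i, |g x i| ≤ B) (i : Fin d) :
    Integrable (fun p => (p.2 i - g p.1 i) ^ 2) D := by
  refine Integrable.of_bound ((measurable_residual hg i).pow_const 2).aestronglyMeasurable
    ((M + B) ^ 2) ?_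
  filter_upwards [ae_abs_residual_le D hybd hB i] with p hp
  rw [Real.norm_eq_abs, abs_pow]
  gcongr

/-- The exact decrease of the potential in one round. -/
lemma sqLoss_shift {M B : ℝ} (hybd : ∀ᵐ p ∂D, ∀ i, p.2 i ∈ Set.Icc (0 : ℝ) M)
    {g : X → Fin d → ℝ} (hg : Measurable g) (hB : ∀ x i, |g x i| ≤ B)
    {C : Set X} (hC : MeasurableSet C) (hpos : 0 < (D {p | p.1 ∈ C}).toReal)
    (Δ : Fin d → ℝ)
    (hΔ : Δ = ∫ p, (p.2 - g p.1) ∂(D[|{p : X × (Fin d → ℝ) | p.1 ∈ C}])) :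
    sqLoss D (fun x => g x + C.indicator (fun _ => Δ) x)
      = sqLoss D g - (D {p | p.1 ∈ C}).toReal * ∑ i, Δ i ^ 2 := by
  set S : Set (X × (Fin d → ℝ)) := {p | p.1 ∈ C} with hSdef
  have hS : MeasurableSet S := measurable_fst hC
  have hne : D S ≠ 0 := fun h0 => by simp [h0] at hpos
  have hmean : ∀ i, ∫ p in S, (p.2 i - g p.1 i) ∂D = D.real S * Δ i := by
    intro i
    have hint : ∀ j, Integrable (fun p : X × (Fin d → ℝ) => (p.2 - g p.1) j) (D[|S]) := by
      intro j
      exact ((integrable_residual D hybd hg hB j).integrableOn (s := S)).smul_measure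
        (ENNReal.inv_ne_top.2 hne)
    rw [hΔ, eval_integral hint]
    simp only [Pi.sub_apply]
    rw [ProbabilityTheory.cond, integral_smul_measure, ENNReal.toReal_inv, smul_eq_mul]
    exact (mul_inv_cancel_left₀ hpos.ne' _).symm
  unfold sqLoss
  rw [Finset.mul_sum, ← Finset.sum_sub_distrib]
  refine Finset.sum_congr rfl fun i _ => ?_
  have key := integral_sq_sub_indicator D hS _ (integrable_residual D hybd hg hB i)
    (integrable_residual_sq D hybd hg hB i) (Δ i) (hmean i)
  rw [Measure.real] at key
  rw [← key]
  congr 1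
  funext p
  by_cases hp : p.1 ∈ C
  · have hp' : p ∈ S := hp
    simp only [Set.indicator_of_mem hp, Set.indicator_of_mem hp', Pi.add_apply]; ring
  · have hp' : p ∉ S := hp
    simp only [Set.indicator_of_notMem hp, Set.indicator_of_notMem hp', Pi.add_apply,
      Pi.zero_apply]; ring

end Step

/-- The sup norm is attained at a coordinate, so its square is at most the sum of squares. -/
lemma sq_norm_le_sum_sq {d : ℕ} (v : Fin d → ℝ) : ‖v‖ ^ 2 ≤ ∑ i, v i ^ 2 := by
  have hs : 0 ≤ ∑ i, v i ^ 2 := Finset.sum_nonneg fun i _ => sq_nonneg _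
  have : ‖v‖ ≤ √(∑ i, v i ^ 2) := by
    refine (pi_norm_le_iff_of_nonneg (Real.sqrt_nonneg _)).2 fun i => ?_
    refine Real.abs_le_sqrt ?_
    exact Finset.single_le_sum (f := fun i => v i ^ 2) (fun i _ => sq_nonneg _)
      (Finset.mem_univ i)
  calc ‖v‖ ^ 2 ≤ √(∑ i, v i ^ 2) ^ 2 := by gcongr
    _ = _ := Real.sq_sqrt hs

/-- Convergence of the Update debiasing procedure: starting from a model `h 0` with values
in `[0, M]^d`, if at each step `t < T` the current model `h t` has conditional bias
exceeding `α` on some positive-probability conditioning event `C t` (i.e.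
`Pr[x ∈ C t] · ‖E[y − h t (x) | x ∈ C t]‖_∞ > α`), and `h (t+1)` is obtained from `h t` by
shifting its predictions on `C t` by the conditional bias vector, then `T ≤ d·M²/α²`. -/
theorem update_procedure_terminates
    {X : Type*} [MeasurableSpace X] {d : ℕ}
    (D : Measure (X × (Fin d → ℝ))) [IsProbabilityMeasure D]
    (M α : ℝ) (hM : 0 < M) (hα : 0 < α)
    (hybd : ∀ᵐ p ∂D, ∀ i, p.2 i ∈ Set.Icc (0 : ℝ) M)
    (T : ℕ) (h : ℕ → X → Fin d → ℝ)
    (hmeas0 : Measurable (h 0))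
    (h0bd : ∀ x i, h 0 x i ∈ Set.Icc (0 : ℝ) M)
    (C : ℕ → Set X)
    (hstep : ∀ t < T,
      MeasurableSet (C t) ∧
      0 < (D {p | p.1 ∈ C t}).toReal ∧
      α < (D {p | p.1 ∈ C t}).toReal
            * ‖∫ p, (p.2 - h t p.1) ∂(D[|{p : X × (Fin d → ℝ) | p.1 ∈ C t}])‖ ∧
      h (t + 1) = fun x => h t x +
        (C t).indicator
          (fun _ => ∫ p, (p.2 - h t p.1) ∂(D[|{p : X × (Fin d → ℝ) | p.1 ∈ C t}])) x) :
    (T : ℝ) ≤ d * M ^ 2 / α ^ 2 := by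
  have inv : ∀ t ≤ T, (Measurable (h t) ∧ ∃ B, ∀ x i, |h t x i| ≤ B) ∧
      sqLoss D (h t) + t * α ^ 2 ≤ d * M ^ 2 := by
    intro t
    induction t with
    | zero =>
      intro _
      refine ⟨⟨hmeas0, M, fun x i => ?_⟩, ?_⟩
      · rw [abs_of_nonneg (h0bd x i).1]
        exact (h0bd x i).2
      · have hle : ∀ i, ∫ p, (p.2 i - h 0 p.1 i) ^ 2 ∂D ≤ M ^ 2 := by
          intro i
          have hB : ∀ x i, |h 0 x i| ≤ M := fun x i => by
            rw [abs_of_nonneg (h0bd x i).1]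
            exact (h0bd x i).2
          calc ∫ p, (p.2 i - h 0 p.1 i) ^ 2 ∂D ≤ ∫ _, M ^ 2 ∂D := by
                refine integral_mono_ae (integrable_residual_sq D hybd hmeas0 hB i)
                  (integrable_const _) ?_
                filter_upwards [hybd] with p hp
                have h1 := hp i
                have h2 := h0bd p.1 i
                -- both the label and the initial prediction lie in `[0, M]`
                exact sq_le_sq' (by linarith [h1.1, h2.2]) (by linarith [h1.2, h2.1])
            _ = M ^ 2 := by simp
        have := Finset.sum_le_sum fun i (_ : i ∈ Finset.univ) => hle i
        simpa [sqLoss] using this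
    | succ t ih =>
      intro ht
      obtain ⟨⟨hm, B, hB⟩, hloss⟩ := ih (by omega)
      obtain ⟨hC, hpos, hbias, hnext⟩ := hstep t (by omega)
      have hshift := sqLoss_shift D hybd hm hB hC hpos _ rfl
      rw [← hnext] at hshift
      set Δ := ∫ p, (p.2 - h t p.1) ∂(D[|{p : X × (Fin d → ℝ) | p.1 ∈ C t}])
      set P := (D {p | p.1 ∈ C t}).toReal
      refine ⟨⟨?_, B + ‖Δ‖, fun x i => ?_⟩, ?_⟩
      · rw [hnext]
        exact hm.add (measurable_const.indicator hC)
      · rw [hnext]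
        refine (abs_add_le _ _).trans (add_le_add (hB x i) ?_)
        by_cases hx : x ∈ C t
        · rw [Set.indicator_of_mem hx]
          exact norm_le_pi_norm Δ i
        · simp [Set.indicator_of_notMem hx]
      · have hP1 : P ≤ 1 := measureReal_le_one
        have hdrop : α ^ 2 ≤ P * ∑ i, Δ i ^ 2 :=
          calc α ^ 2 ≤ (P * ‖Δ‖) ^ 2 := by gcongr
            _ = P * (P * ‖Δ‖ ^ 2) := by ring
            _ ≤ P * (1 * ‖Δ‖ ^ 2) := by gcongr
            _ ≤ P * ∑ i, Δ i ^ 2 := by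
              rw [one_mul]
              gcongr
              exact sq_norm_le_sum_sq Δ
        push_cast
        linarith
  have hT := (inv T le_rfl).2
  have hnn : 0 ≤ sqLoss D (h T) :=
    Finset.sum_nonneg fun i _ => integral_nonneg fun p => sq_nonneg _
  rw [le_div_iff₀ (by positivity)]
  linarith
end

section
/- Let D be a distribution over X × ℝ^d with y ∈ [0, M]^d almost surely, and let α > 0. Suppose there are k models h^0_1, …, h^0_k : X → [0, M]^d, which are iteratively updated so that each individual update replaces some model h^t_i by h^{t+1}_i(x) = h^t_i(x) + Δ · 1[x ∈ C] for a measurable set C with Pr_D[x ∈ C] > 0 satisfying Pr_D[x ∈ C] · ‖E_D[y − h^t_i(x) | x ∈ C]‖_∞ > α, where Δ = E_D[y − h^t_i(x) | x ∈ C]. Then the total number of such updates across all k models is at most k·d·M²/α²; in particular, the White Box Ensembling procedure terminates within k·d·M²/α² rounds. -/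
/-!
The potential is the total squared error `Φ t = ∑ i, ∑ j, E[(y_j - h t i (x)_j)²]`. Since labels and
initial predictions lie in `[0, M]`, it starts at most at `k * d * M²`, and it is never negative.
Shifting a model on `C` by its mean residual `Δ` there lowers the squared error in coordinate `j` by
exactly `Pr[C] * Δ_j²` (`integral_sq_sub_indicator_cond_mean`). As `Pr[C] ≤ 1`, the total decrease
is at least `Pr[C] * ‖Δ‖² ≥ (Pr[C] * ‖Δ‖)² > α²` (`sq_le_mul_sum_sq_of_lt_mul_norm`).
Hence `T * α² ≤ k * d * M²`.
-/

open MeasureTheory ProbabilityTheory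

/-- Subtracting from `f`, on an event `S`, its conditional mean given `S` lowers the second moment
by `μ S` times the squared conditional mean. -/
lemma integral_sq_sub_indicator_cond_mean {Ω : Type*} [MeasurableSpace Ω] (μ : Measure Ω)
    [IsProbabilityMeasure μ] {S : Set Ω} (hS : MeasurableSet S) (hpos : 0 < μ.real S)
    {f : Ω → ℝ} (hf : MemLp f 2 μ) {δ : ℝ} (hδ : δ = ∫ ω, f ω ∂(μ[|S])) :
    ∫ ω, (f ω - S.indicator (fun _ => δ) ω) ^ 2 ∂μ = ∫ ω, f ω ^ 2 ∂μ - μ.real S * δ ^ 2 := by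
  have hint : Integrable f μ := hf.integrable (by norm_num)
  have hsq : Integrable (fun ω => f ω ^ 2) μ := hf.integrable_sq
  have hmean : ∫ ω in S, f ω ∂μ = μ.real S * δ := by
    rw [hδ, ProbabilityTheory.cond, integral_smul_measure, ENNReal.toReal_inv, smul_eq_mul,
      ← measureReal_def, mul_inv_cancel_left₀ hpos.ne']
  have hexpand : ∀ ω, (f ω - S.indicator (fun _ => δ) ω) ^ 2
      = f ω ^ 2 - S.indicator (fun ω => 2 * δ * f ω - δ ^ 2) ω := by
    intro ω
    by_cases hω : ω ∈ S
    · simp only [Set.indicator_of_mem hω]; ring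
    · simp [Set.indicator_of_notMem hω]
  have hint' : Integrable (fun ω => 2 * δ * f ω - δ ^ 2) μ :=
    (hint.const_mul _).sub (integrable_const _)
  simp_rw [hexpand]
  rw [integral_sub hsq (hint'.indicator hS), integral_indicator hS,
    integral_sub (hint.const_mul _).integrableOn (integrable_const _).integrableOn,
    integral_const_mul, hmean, setIntegral_const, smul_eq_mul]
  ring

/-- Probability-weighted sup-norm bias above `α` forces the weighted squared Euclidean bias
to be at least `α²`, because the weight is at most one. -/
lemma sq_le_mul_sum_sq_of_lt_mul_norm {d : ℕ} {q α : ℝ} (hα : 0 < α) (hq0 : 0 < q) (hq1 : q ≤ 1)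
    (v : Fin d → ℝ) (hv : α < q * ‖v‖) : α ^ 2 ≤ q * ∑ j, v j ^ 2 := by
  have hsum : 0 ≤ ∑ j, v j ^ 2 := Finset.sum_nonneg fun j _ => sq_nonneg _
  have hnorm : ‖v‖ ≤ √(∑ j, v j ^ 2) := by
    refine (pi_norm_le_iff_of_nonneg (Real.sqrt_nonneg _)).2 fun j => ?_
    exact Real.abs_le_sqrt
      (Finset.single_le_sum (f := fun j => v j ^ 2) (fun i _ => sq_nonneg _) (Finset.mem_univ j))
  have hnsq : ‖v‖ ^ 2 ≤ ∑ j, v j ^ 2 := by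
    calc ‖v‖ ^ 2 ≤ √(∑ j, v j ^ 2) ^ 2 := by gcongr
      _ = _ := Real.sq_sqrt hsum
  calc α ^ 2 ≤ (q * ‖v‖) ^ 2 := by gcongr
    _ = q * (q * ‖v‖ ^ 2) := by ring
    _ ≤ q * (1 * ‖v‖ ^ 2) := by gcongr
    _ ≤ q * ∑ j, v j ^ 2 := by rw [one_mul]; gcongr

/-- Convergence of the White Box Ensembling procedure: `k` models, each starting with
values in `[0, M]^d`, are iteratively updated; at each step `t < T` some model `idx t` is
patched on a positive-probability conditioning event `C t` on which it has conditional
bias exceeding `α` (i.e. `Pr[x ∈ C t] · ‖E[y − h t (idx t) (x) | x ∈ C t]‖_∞ > α`),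
shifting its predictions on `C t` by the conditional bias vector and leaving the other
models unchanged. Then the total number of updates satisfies `T ≤ k·d·M²/α²`. -/
theorem white_box_ensembling_terminates
    {X : Type*} [MeasurableSpace X] {d k : ℕ}
    (D : Measure (X × (Fin d → ℝ))) [IsProbabilityMeasure D]
    (M α : ℝ) (hM : 0 < M) (hα : 0 < α)
    (hybd : ∀ᵐ p ∂D, ∀ i, p.2 i ∈ Set.Icc (0 : ℝ) M)
    (T : ℕ) (h : ℕ → Fin k → X → Fin d → ℝ)
    (hmeas0 : ∀ i, Measurable (h 0 i))
    (h0bd : ∀ i x j, h 0 i x j ∈ Set.Icc (0 : ℝ) M)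
    (idx : ℕ → Fin k) (C : ℕ → Set X)
    (hstep : ∀ t < T,
      MeasurableSet (C t) ∧
      0 < (D {p | p.1 ∈ C t}).toReal ∧
      α < (D {p | p.1 ∈ C t}).toReal
            * ‖∫ p, (p.2 - h t (idx t) p.1)
                ∂(D[|{p : X × (Fin d → ℝ) | p.1 ∈ C t}])‖ ∧
      (h (t + 1) (idx t) = fun x => h t (idx t) x +
        (C t).indicator
          (fun _ => ∫ p, (p.2 - h t (idx t) p.1)
              ∂(D[|{p : X × (Fin d → ℝ) | p.1 ∈ C t}])) x) ∧
      (∀ i, i ≠ idx t → h (t + 1) i = h t i)) :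
    (T : ℝ) ≤ k * d * M ^ 2 / α ^ 2 := by
  have hinv : ∀ t ≤ T, (∀ i j, MemLp (fun p : X × (Fin d → ℝ) => p.2 j - h t i p.1 j) 2 D) ∧
      ∑ i, ∑ j, ∫ p, (p.2 j - h t i p.1 j) ^ 2 ∂D + t * α ^ 2 ≤ k * d * M ^ 2 := by
    intro t
    induction t with
    | zero =>
      intro _
      have hbound : ∀ i j, ∀ᵐ p ∂D, |p.2 j - h 0 i p.1 j| ≤ M := by
        intro i j
        filter_upwards [hybd] with p hp
        have h1 := hp j
        have h2 := h0bd i p.1 j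
        rw [Set.mem_Icc] at h1 h2
        rw [abs_le]
        constructor <;> linarith
      have hmem : ∀ i j, MemLp (fun p : X × (Fin d → ℝ) => p.2 j - h 0 i p.1 j) 2 D := by
        intro i j
        refine MemLp.of_bound (Measurable.aestronglyMeasurable ?_) M (hbound i j)
        have h1 : Measurable fun p : X × (Fin d → ℝ) => h 0 i p.1 j :=
          (measurable_pi_apply j).comp ((hmeas0 i).comp measurable_fst)
        exact ((measurable_pi_apply j).comp measurable_snd).sub h1
      refine ⟨hmem, ?_⟩
      have hle : ∀ i j, ∫ p, (p.2 j - h 0 i p.1 j) ^ 2 ∂D ≤ M ^ 2 := by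
        intro i j
        calc ∫ p, (p.2 j - h 0 i p.1 j) ^ 2 ∂D ≤ ∫ _, M ^ 2 ∂D := by
              refine integral_mono_ae (hmem i j).integrable_sq (integrable_const _) ?_
              filter_upwards [hbound i j] with p hp
              exact sq_le_sq' (abs_le.1 hp).1 (abs_le.1 hp).2
          _ = M ^ 2 := by simp
      calc _ ≤ ∑ _i : Fin k, ∑ _j : Fin d, M ^ 2 + ((0 : ℕ) : ℝ) * α ^ 2 := by
            gcongr with i _ j _
            exact hle i j
        _ = k * d * M ^ 2 := by simp [mul_assoc]
    | succ t ih =>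
      intro ht
      obtain ⟨hmem, hpot⟩ := ih (by omega)
      obtain ⟨hC, hpos, hbias, hupd, hrest⟩ := hstep t (by omega)
      set S : Set (X × (Fin d → ℝ)) := {p | p.1 ∈ C t} with hSdef
      have hS : MeasurableSet S := measurable_fst hC
      set Δ : Fin d → ℝ := ∫ p, (p.2 - h t (idx t) p.1) ∂(D[|S]) with hΔ
      have hcond : ∀ j, Δ j = ∫ p, (p.2 j - h t (idx t) p.1 j) ∂(D[|S]) := by
        intro j
        refine eval_integral (f := fun p : X × (Fin d → ℝ) => p.2 - h t (idx t) p.1)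
          (fun j => ?_) j
        refine Integrable.smul_measure ?_ ?_
        · exact ((hmem (idx t) j).integrable (by norm_num)).integrableOn
        · exact ENNReal.inv_ne_top.2 fun h0 => by simp [h0] at hpos
      have hres : ∀ j, (fun p : X × (Fin d → ℝ) => p.2 j - h (t + 1) (idx t) p.1 j)
          = fun p => (p.2 j - h t (idx t) p.1 j) - S.indicator (fun _ => Δ j) p := by
        intro j
        funext p
        rw [hupd]
        by_cases hp : p.1 ∈ C t
        · have hp' : p ∈ S := hp
          simp only [Set.indicator_of_mem hp, Set.indicator_of_mem hp', Pi.add_apply]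
          ring
        · have hp' : p ∉ S := hp
          simp [Set.indicator_of_notMem hp, Set.indicator_of_notMem hp']
      refine ⟨fun i j => ?_, ?_⟩
      · by_cases hi : i = idx t
        · subst hi
          rw [hres j]
          exact (hmem _ j).sub ((memLp_const (Δ j)).indicator hS)
        · rw [hrest i hi]
          exact hmem i j
      · have hdec : ∀ i, ∑ j, ∫ p, (p.2 j - h (t + 1) i p.1 j) ^ 2 ∂D
            ≤ ∑ j, ∫ p, (p.2 j - h t i p.1 j) ^ 2 ∂D - if i = idx t then α ^ 2 else 0 := by
          intro i
          by_cases hi : i = idx t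
          · subst hi
            have hj : ∀ j, ∫ p, (p.2 j - h (t + 1) (idx t) p.1 j) ^ 2 ∂D
                = ∫ p, (p.2 j - h t (idx t) p.1 j) ^ 2 ∂D - D.real S * Δ j ^ 2 := by
              intro j
              rw [← integral_sq_sub_indicator_cond_mean D hS hpos (hmem (idx t) j) (hcond j)]
              exact integral_congr_ae (.of_forall fun p => congrArg (· ^ 2) (congrFun (hres j) p))
            simp only [hj, if_true, Finset.sum_sub_distrib, ← Finset.mul_sum]
            exact sub_le_sub_left
              (sq_le_mul_sum_sq_of_lt_mul_norm hα hpos measureReal_le_one Δ hbias) _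
          · simp [hrest i hi, hi]
        have hsum := Finset.sum_le_sum fun i (_ : i ∈ Finset.univ) => hdec i
        rw [Finset.sum_sub_distrib, Finset.sum_ite_eq' Finset.univ (idx t)] at hsum
        simp only [Finset.mem_univ, if_true] at hsum
        push_cast
        linarith
  have hfinal := (hinv T le_rfl).2
  have hnonneg : 0 ≤ ∑ i, ∑ j, ∫ p, (p.2 j - h T i p.1 j) ^ 2 ∂D :=
    Finset.sum_nonneg fun i _ => Finset.sum_nonneg fun j _ =>
      integral_nonneg fun p => sq_nonneg _
  rw [le_div_iff₀ (by positivity)]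
  linarith
end

section
/- Let D be a distribution over X × ℝ^d with ‖y‖_∞ ≤ M almost surely, let π : X → [0,1]^d be a policy, and let h : X → ℝ^d be a model that is α-consistent with respect to π for the bucketing T of width w (0 < w ≤ 1, 1/w an integer). Then |E_D[π(x)·h(x)] − E_D[π(x)·y]| ≤ αd/w + wMd. -/
open MeasureTheory ProbabilityTheory

/-!
The payoff difference is the sum over coordinates `i` of `E[π_i (h_i - y_i)]`. Splitting this
expectation over the level sets `S_b = {π_i ∈ T b}`, on each of them `π_i` is replaced by the
constant bucket midpoint, at a cost of at most `(w/2) · 2M · Pr[S_b]`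
(`abs_setIntegral_mul_le`); the remaining constant lies in `[0,1]` and multiplies
`∫_{S_b} (h_i - y_i)`, which `α`-consistency bounds by `α` (`norm_setIntegral_le_of_cond`).
Summing over the `N = 1/w` buckets gives `α/w + wM` per coordinate.

The hypotheses do not say that the midpoints lie in `[0,1]`, so they are first clamped to `[0,1]`;
this does not increase their distance to the values of `π`.
-/

/-- A consistency bound on the conditional mean over `S` bounds the integral over `S`, because
the factor `μ S` cancels the normalization of `μ[|S]`; on a null set both quantities vanish. -/
lemma norm_setIntegral_le_of_cond {Ω E : Type*} [MeasurableSpace Ω] [NormedAddCommGroup E]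
    [NormedSpace ℝ E] (μ : Measure Ω) [IsFiniteMeasure μ] (S : Set Ω) (f : Ω → E) (α : ℝ)
    (hα : (μ S).toReal * ‖∫ p, f p ∂(μ[|S])‖ ≤ α) : ‖∫ p in S, f p ∂μ‖ ≤ α := by
  rw [ProbabilityTheory.cond, integral_smul_measure, norm_smul, ENNReal.toReal_inv, norm_inv,
    Real.norm_of_nonneg ENNReal.toReal_nonneg] at hα
  by_cases h0 : μ S = 0
  · simpa [h0, Measure.restrict_eq_zero.mpr h0] using hα
  · have : (μ S).toReal ≠ 0 := ENNReal.toReal_ne_zero.mpr ⟨h0, measure_ne_top _ _⟩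
    rwa [← mul_assoc, mul_inv_cancel₀ this, one_mul] at hα

/-- Replacing `f` by a constant `m ∈ [0,1]` that is `w/2`-close to it on `S`, in an integral
against a function `g` bounded by `2M`. -/
lemma abs_setIntegral_mul_le {Ω : Type*} [MeasurableSpace Ω] (μ : Measure Ω) [IsFiniteMeasure μ]
    {S : Set Ω} {f g : Ω → ℝ} {m w M α : ℝ}
    (hfg : Integrable (fun p => f p * g p) μ) (hg : Integrable g μ)
    (hgM : ∀ᵐ p ∂μ, |g p| ≤ 2 * M) (hw : 0 ≤ w) (hm0 : 0 ≤ m) (hm1 : m ≤ 1)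
    (hfm : ∀ p ∈ S, |f p - m| ≤ w / 2) (hα : |∫ p in S, g p ∂μ| ≤ α) :
    |∫ p in S, f p * g p ∂μ| ≤ α + w * M * μ.real S := by
  have hsplit : ∫ p in S, f p * g p ∂μ
      = m * (∫ p in S, g p ∂μ) + ∫ p in S, (f p - m) * g p ∂μ := by
    rw [← integral_const_mul, ← integral_add (hg.const_mul m).integrableOn]
    · congr 1; ext p; ring
    · have : (fun p => (f p - m) * g p) = fun p => f p * g p - m * g p := by ext p; ring
      rw [this]
      exact (hfg.sub (hg.const_mul m)).integrableOn
  have h1 : |m * (∫ p in S, g p ∂μ)| ≤ α := by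
    rw [abs_mul, abs_of_nonneg hm0]
    exact (mul_le_of_le_one_left (abs_nonneg _) hm1).trans hα
  have h2 : |∫ p in S, (f p - m) * g p ∂μ| ≤ w * M * μ.real S := by
    rw [← Real.norm_eq_abs]
    refine norm_setIntegral_le_of_norm_le_const_ae' (measure_lt_top _ _) ?_
    filter_upwards [hgM] with p hp hpS
    rw [Real.norm_eq_abs, abs_mul]
    calc |f p - m| * |g p| ≤ (w / 2) * (2 * M) :=
          mul_le_mul (hfm p hpS) hp (abs_nonneg _) (by positivity)
      _ = w * M := by ring
  rw [hsplit]
  exact (abs_add_le _ _).trans (add_le_add h1 h2)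

/-- If a model `h` is `α`-consistent with respect to the level sets of a policy `π`
(for a bucketing `T` of `[0,1]` into `1/w` buckets of width `w`, each point of a bucket
being within `w/2` of its midpoint), then the policy's payoff as evaluated via the
model's predicted labels is within `αd/w + wMd` of its true expected payoff:
`|E[π(x)·h(x)] − E[π(x)·y]| ≤ αd/w + wMd`. -/
theorem consistent_predictions_estimate_payoff
    {X : Type*} [MeasurableSpace X] {d : ℕ}
    (D : Measure (X × (Fin d → ℝ))) [IsProbabilityMeasure D]
    (M α w : ℝ) (hM : 0 < M)
    (hw : 0 < w) (hw1 : w ≤ 1)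
    (N : ℕ) (hNw : (N : ℝ) * w = 1)
    (T : Fin N → Set ℝ) (mid : Fin N → ℝ)
    (hcover : Set.Icc (0 : ℝ) 1 ⊆ ⋃ b, T b)
    (hdisj : Pairwise (Function.onFun Disjoint T))
    (hmid : ∀ b, ∀ v ∈ T b, |v - mid b| ≤ w / 2)
    (hTmeas : ∀ b, MeasurableSet (T b))
    (π : X → Fin d → ℝ) (hπmeas : Measurable π)
    (hπrange : ∀ x i, π x i ∈ Set.Icc (0 : ℝ) 1)
    (h : X → Fin d → ℝ) (hmeas : Measurable h)
    (hhbd : ∀ x, ‖h x‖ ≤ M) (hybd : ∀ᵐ p ∂D, ‖p.2‖ ≤ M)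
    (hcons : ∀ (i : Fin d) (b : Fin N),
      (D {p | π p.1 i ∈ T b}).toReal
        * ‖∫ p, (p.2 - h p.1) ∂(D[|{p : X × (Fin d → ℝ) | π p.1 i ∈ T b}])‖ ≤ α) :
    |(∫ p, (∑ i, π p.1 i * h p.1 i) ∂D) - (∫ p, (∑ i, π p.1 i * p.2 i) ∂D)|
      ≤ α * d / w + w * M * d := by
  have hsnd : Integrable (fun p : X × (Fin d → ℝ) => p.2) D :=
    Integrable.of_bound measurable_snd.aestronglyMeasurable M hybd
  have hh : Integrable (fun p : X × (Fin d → ℝ) => h p.1) D :=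
    Integrable.of_bound (hmeas.comp measurable_fst).aestronglyMeasurable M
      (Filter.Eventually.of_forall fun p => hhbd p.1)
  have hπi : ∀ i, Measurable fun p : X × (Fin d → ℝ) => π p.1 i := fun i =>
    (measurable_pi_apply i).comp (hπmeas.comp measurable_fst)
  have hyi : ∀ i, Integrable (fun p : X × (Fin d → ℝ) => p.2 i) D := fun i => hsnd.eval i
  have hhi : ∀ i, Integrable (fun p : X × (Fin d → ℝ) => h p.1 i) D := fun i => hh.eval i
  have hmul : ∀ i (g : X × (Fin d → ℝ) → ℝ), Integrable g D →
      Integrable (fun p => π p.1 i * g p) D := fun i g hg =>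
    hg.bdd_mul (c := 1) (hπi i).aestronglyMeasurable (Filter.Eventually.of_forall fun p => by
      rw [Real.norm_eq_abs, abs_of_nonneg (hπrange p.1 i).1]
      exact (hπrange p.1 i).2)
  have hcoord : ∀ i, |∫ p, π p.1 i * (h p.1 i - p.2 i) ∂D| ≤ α / w + w * M := by
    intro i
    let S : Fin N → Set (X × (Fin d → ℝ)) := fun b => {p | π p.1 i ∈ T b}
    have hS : ∀ b, MeasurableSet (S b) := fun b => hπi i (hTmeas b)
    have hSdisj : Pairwise (Function.onFun Disjoint S) := fun b c hbc =>
      (hdisj hbc).preimage fun p : X × (Fin d → ℝ) => π p.1 i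
    have hSuniv : ⋃ b, S b = Set.univ := by
      refine Set.eq_univ_of_forall fun p => ?_
      obtain ⟨b, hb⟩ := Set.mem_iUnion.mp (hcover (hπrange p.1 i))
      exact Set.mem_iUnion.mpr ⟨b, hb⟩
    have hint : Integrable (fun p => π p.1 i * (h p.1 i - p.2 i)) D :=
      hmul i _ ((hhi i).sub (hyi i))
    have hbucket : ∀ b, |∫ p in S b, π p.1 i * (h p.1 i - p.2 i) ∂D|
        ≤ α + w * M * D.real (S b) := by
      intro b
      refine abs_setIntegral_mul_le D (S := S b) (m := max 0 (min 1 (mid b))) hint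
        ((hhi i).sub (hyi i)) ?_ hw.le (le_max_left _ _)
        (max_le zero_le_one (min_le_left _ _)) ?_ ?_
      · filter_upwards [hybd] with p hp
        have h1 := (norm_le_pi_norm (h p.1) i).trans (hhbd p.1)
        have h2 := (norm_le_pi_norm p.2 i).trans hp
        rw [Real.norm_eq_abs] at h1 h2
        exact (abs_sub _ _).trans (by linarith)
      · intro p hp
        have hv := hmid b _ hp
        obtain ⟨h0, h1⟩ := hπrange p.1 i
        rw [abs_le] at hv ⊢
        rcases max_cases 0 (min 1 (mid b)) with ⟨e, _⟩ | ⟨e, _⟩ <;>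
          rcases min_cases 1 (mid b) with ⟨e', _⟩ | ⟨e', _⟩ <;>
          rw [e] <;> constructor <;> linarith [hv.1, hv.2]
      · have hc := norm_setIntegral_le_of_cond D (S b) _ α (hcons i b)
        have he : ∫ p in S b, (h p.1 i - p.2 i) ∂D
            = -((∫ p in S b, (p.2 - h p.1) ∂D) i) := by
          rw [eval_integral (f := fun p : X × (Fin d → ℝ) => p.2 - h p.1)
            fun j => ((hsnd.sub hh).eval j).integrableOn, ← integral_neg]
          simp
        rw [he, abs_neg]
        exact (norm_le_pi_norm _ i).trans hc
    have hprob : ∑ b, D.real (S b) = 1 := by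
      rw [← measureReal_iUnion_fintype hSdisj hS, hSuniv, probReal_univ]
    calc |∫ p, π p.1 i * (h p.1 i - p.2 i) ∂D|
        = |∑ b, ∫ p in S b, π p.1 i * (h p.1 i - p.2 i) ∂D| := by
          rw [← integral_iUnion_fintype hS hSdisj fun b => hint.integrableOn, hSuniv,
            setIntegral_univ]
      _ ≤ ∑ b, |∫ p in S b, π p.1 i * (h p.1 i - p.2 i) ∂D| := Finset.abs_sum_le_sum_abs _ _
      _ ≤ ∑ b, (α + w * M * D.real (S b)) := Finset.sum_le_sum fun b _ => hbucket b
      _ = N * α + w * M := by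
          rw [Finset.sum_add_distrib, ← Finset.mul_sum, hprob]
          simp
      _ = α / w + w * M := by
          rw [eq_div_of_mul_eq hw.ne' hNw]
          ring
  have hdiff : (∫ p, (∑ i, π p.1 i * h p.1 i) ∂D) - (∫ p, (∑ i, π p.1 i * p.2 i) ∂D)
      = ∑ i, ∫ p, π p.1 i * (h p.1 i - p.2 i) ∂D := by
    rw [integral_finsetSum _ fun i _ => hmul i _ (hhi i),
      integral_finsetSum _ fun i _ => hmul i _ (hyi i), ← Finset.sum_sub_distrib]
    refine Finset.sum_congr rfl fun i _ => ?_
    rw [← integral_sub (hmul i _ (hhi i)) (hmul i _ (hyi i))]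
    simp only [mul_sub]
  rw [hdiff]
  calc _ ≤ ∑ i, |∫ p, π p.1 i * (h p.1 i - p.2 i) ∂D| := Finset.abs_sum_le_sum_abs _ _
    _ ≤ ∑ _i : Fin d, (α / w + w * M) := Finset.sum_le_sum fun i _ => hcoord i
    _ = α * d / w + w * M * d := by
      simp only [Finset.sum_const, Finset.card_univ, Fintype.card_fin, nsmul_eq_mul]
      ring
end

section
/- Let D be a distribution over X × ℝ^d with ‖y‖_∞ ≤ M almost surely, let π : X → [0,1]^d be an arbitrary policy, and let h : X → ℝ^d be a model that is α-consistent with respect to π for the bucketing T of width w = √(α/M). Then |E_D[π(x)·h(x)] − E_D[π(x)·y]| ≤ 2d√(αM). -/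
open MeasureTheory ProbabilityTheory

/-!
Both payoffs are sums over coordinates, so it suffices to bound `E[π(x)_i (y_i - h(x)_i)]` by
`2√(αM)` for each `i`. On the level set of a bucket, `π(x)_i` is replaced by a constant
`c ∈ [0,1]` at distance at most `w/2`. The constant part contributes at most `α` per bucket by
consistency, in total `Nα = α/w = √(αM)`. Since `|y_i - h(x)_i| ≤ 2M`, the rounding error
contributes at most `(w/2)·2M·Pr[level set]`, in total `wM = √(αM)`.
`abs_integral_mul_le_of_buckets` is this argument for one coordinate, and
`abs_setIntegral_le_of_cond` turns consistency into a bound on integrals over level sets.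
-/

/-- The one-coordinate estimate: a `[0,1]`-valued weight `f` is rounded on each of its `N`
level sets, on which `g` has integral at most `α` in absolute value. -/
lemma abs_integral_mul_le_of_buckets {Ω : Type*} [MeasurableSpace Ω] (D : Measure Ω)
    [IsProbabilityMeasure D] {M α w : ℝ} {N : ℕ} (T : Fin N → Set ℝ) (mid : Fin N → ℝ)
    (hcover : Set.Icc (0 : ℝ) 1 ⊆ ⋃ b, T b)
    (hdisj : Pairwise (Function.onFun Disjoint T))
    (hmid : ∀ b, ∀ v ∈ T b, |v - mid b| ≤ w / 2)
    (hTmeas : ∀ b, MeasurableSet (T b))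
    (f g : Ω → ℝ) (hf : Measurable f) (hf01 : ∀ x, f x ∈ Set.Icc (0 : ℝ) 1)
    (hg : Integrable g D) (hgbd : ∀ᵐ x ∂D, |g x| ≤ 2 * M) (hw : 0 ≤ w)
    (hcons : ∀ b, |∫ x in f ⁻¹' T b, g x ∂D| ≤ α) :
    |∫ x, f x * g x ∂D| ≤ N * α + w * M := by
  have hCm : ∀ b, MeasurableSet (f ⁻¹' T b) := fun b => hf (hTmeas b)
  have hCd : Pairwise (Function.onFun Disjoint fun b => f ⁻¹' T b) :=
    fun a b hab => (hdisj hab).preimage f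
  have hCU : ⋃ b, f ⁻¹' T b = Set.univ := by
    rw [← Set.preimage_iUnion]
    exact Set.eq_univ_of_forall fun x => hcover (hf01 x)
  have hfg : Integrable (fun x => f x * g x) D :=
    hg.bdd_mul (c := 1) hf.aestronglyMeasurable
      (Filter.Eventually.of_forall fun x => by
        rw [Real.norm_eq_abs, abs_of_nonneg (hf01 x).1]; exact (hf01 x).2)
  have hsplit : ∀ u : Ω → ℝ, Integrable u D → ∫ x, u x ∂D = ∑ b, ∫ x in f ⁻¹' T b, u x ∂D := by
    intro u hu
    rw [← setIntegral_univ, ← hCU]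
    exact integral_iUnion_fintype hCm hCd fun b => hu.integrableOn
  have hone : ∑ b, D.real (f ⁻¹' T b) = 1 := by
    have := hsplit (fun _ => 1) (integrable_const _)
    simpa using this.symm
  have hbucket : ∀ b, |∫ x in f ⁻¹' T b, f x * g x ∂D|
      ≤ α + w * M * D.real (f ⁻¹' T b) := by
    intro b
    -- Nothing forces `mid b` into `[0,1]`; its projection there is no farther from the values
    -- of `f`, which do lie in `[0,1]`.
    obtain ⟨c, hc0, hc1, hc⟩ : ∃ c : ℝ, 0 ≤ c ∧ c ≤ 1 ∧
        ∀ v ∈ T b, v ∈ Set.Icc (0 : ℝ) 1 → |v - c| ≤ w / 2 := by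
      refine ⟨max 0 (min 1 (mid b)), le_max_left _ _, by simp, fun v hv hv01 => ?_⟩
      have h1 := abs_le.1 (hmid b v hv)
      obtain ⟨h2, h3⟩ := hv01
      rw [abs_le]
      rcases max_cases 0 (min 1 (mid b)) with h4 | h4 <;>
        rcases min_cases 1 (mid b) with h5 | h5 <;> constructor <;> linarith
    have hdecomp : ∫ x in f ⁻¹' T b, f x * g x ∂D
        = c * (∫ x in f ⁻¹' T b, g x ∂D) + ∫ x in f ⁻¹' T b, (f x - c) * g x ∂D := by
      rw [← integral_const_mul, ← integral_add (hg.integrableOn.const_mul c)]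
      · congr 1; ext x; ring
      · have := (hfg.sub (hg.const_mul c)).integrableOn (s := f ⁻¹' T b)
        refine this.congr (Filter.Eventually.of_forall fun x => ?_)
        simp only [Pi.sub_apply]; ring
    have hround : ‖∫ x in f ⁻¹' T b, (f x - c) * g x ∂D‖
        ≤ (w / 2 * (2 * M)) * D.real (f ⁻¹' T b) := by
      refine norm_setIntegral_le_of_norm_le_const_ae' (measure_lt_top _ _) ?_
      filter_upwards [hgbd] with x hx hxb
      rw [norm_mul]
      exact mul_le_mul (hc _ hxb (hf01 x)) hx (norm_nonneg _) (by linarith)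
    have hconst : |c * ∫ x in f ⁻¹' T b, g x ∂D| ≤ α := by
      rw [abs_mul, abs_of_nonneg hc0]
      exact (mul_le_of_le_one_left (abs_nonneg _) hc1).trans (hcons b)
    rw [hdecomp]
    rw [Real.norm_eq_abs] at hround
    refine (abs_add_le _ _).trans (add_le_add hconst (hround.trans (le_of_eq (by ring))))
  calc |∫ x, f x * g x ∂D| = |∑ b, ∫ x in f ⁻¹' T b, f x * g x ∂D| := by rw [hsplit _ hfg]
    _ ≤ ∑ b, |∫ x in f ⁻¹' T b, f x * g x ∂D| := Finset.abs_sum_le_sum_abs _ _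
    _ ≤ ∑ b, (α + w * M * D.real (f ⁻¹' T b)) := Finset.sum_le_sum fun b _ => hbucket b
    _ = N * α + w * M := by
      rw [Finset.sum_add_distrib, ← Finset.mul_sum, hone]; simp

/-- The weight `Pr[C]` cancels the normalization of the conditional expectation given `C`; when
`Pr[C] = 0` the integral over `C` vanishes. -/
lemma abs_setIntegral_le_of_cond {Ω : Type*} [MeasurableSpace Ω] {d : ℕ} (D : Measure Ω)
    [IsProbabilityMeasure D] {α : ℝ} {C : Set Ω} {u : Ω → Fin d → ℝ} (hu : Integrable u D)
    (hC : (D C).toReal * ‖∫ p, u p ∂(D[|C])‖ ≤ α) (i : Fin d) :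
    |∫ p in C, u p i ∂D| ≤ α := by
  have hvec : ‖∫ p in C, u p ∂D‖ ≤ α := by
    by_cases h0 : D C = 0
    · rw [Measure.restrict_eq_zero.2 h0]
      simpa [h0] using hC
    · have hpos : 0 < (D C).toReal := ENNReal.toReal_pos h0 (measure_ne_top _ _)
      rw [ProbabilityTheory.cond, integral_smul_measure, norm_smul, ENNReal.toReal_inv, norm_inv,
        Real.norm_of_nonneg hpos.le, ← mul_assoc, mul_inv_cancel₀ hpos.ne', one_mul] at hC
      exact hC
  rw [← eval_integral fun j => (hu.eval j).integrableOn]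
  exact (norm_le_pi_norm _ i).trans hvec

/-- If a model `h` is `α`-consistent with respect to the level sets of an arbitrary
policy `π` (for a bucketing `T` of `[0,1]` into buckets of width `w = √(α/M)`), then
`|E[π(x)·h(x)] − E[π(x)·y]| ≤ 2d√(αM)`. -/
theorem consistent_predictions_estimate_payoff_sqrt
    {X : Type*} [MeasurableSpace X] {d : ℕ}
    (D : Measure (X × (Fin d → ℝ))) [IsProbabilityMeasure D]
    (M α w : ℝ) (hM : 0 < M) (hα : 0 < α)
    (hw : w = Real.sqrt (α / M)) (hw1 : w ≤ 1)
    (N : ℕ) (hNw : (N : ℝ) * w = 1)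
    (T : Fin N → Set ℝ) (mid : Fin N → ℝ)
    (hcover : Set.Icc (0 : ℝ) 1 ⊆ ⋃ b, T b)
    (hdisj : Pairwise (Function.onFun Disjoint T))
    (hmid : ∀ b, ∀ v ∈ T b, |v - mid b| ≤ w / 2)
    (hTmeas : ∀ b, MeasurableSet (T b))
    (π : X → Fin d → ℝ) (hπmeas : Measurable π)
    (hπrange : ∀ x i, π x i ∈ Set.Icc (0 : ℝ) 1)
    (h : X → Fin d → ℝ) (hmeas : Measurable h)
    (hhbd : ∀ x, ‖h x‖ ≤ M) (hybd : ∀ᵐ p ∂D, ‖p.2‖ ≤ M)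
    (hcons : ∀ (i : Fin d) (b : Fin N),
      (D {p | π p.1 i ∈ T b}).toReal
        * ‖∫ p, (p.2 - h p.1) ∂(D[|{p : X × (Fin d → ℝ) | π p.1 i ∈ T b}])‖ ≤ α) :
    |(∫ p, (∑ i, π p.1 i * h p.1 i) ∂D) - (∫ p, (∑ i, π p.1 i * p.2 i) ∂D)|
      ≤ 2 * d * Real.sqrt (α * M) := by
  have hwpos : 0 < w := hw ▸ Real.sqrt_pos.2 (div_pos hα hM)
  have hαw : α = w * w * M := by
    rw [hw, Real.mul_self_sqrt (div_pos hα hM).le, div_mul_cancel₀ _ hM.ne']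
  have hsqrt : Real.sqrt (α * M) = w * M := by
    rw [hαw, show w * w * M * M = (w * M) * (w * M) by ring,
      Real.sqrt_mul_self (mul_pos hwpos hM).le]
  have hNα : (N : ℝ) * α = w * M := by
    rw [hαw, show (N : ℝ) * (w * w * M) = (N * w) * (w * M) by ring, hNw, one_mul]
  have hhm : Measurable fun p : X × (Fin d → ℝ) => h p.1 := hmeas.comp measurable_fst
  have hh : Integrable (fun p : X × (Fin d → ℝ) => h p.1) D :=
    Integrable.of_bound hhm.aestronglyMeasurable M (Filter.Eventually.of_forall fun p => hhbd p.1)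
  have hy : Integrable (fun p : X × (Fin d → ℝ) => p.2) D :=
    Integrable.of_bound measurable_snd.aestronglyMeasurable M hybd
  have hπm : ∀ i, Measurable fun p : X × (Fin d → ℝ) => π p.1 i := fun i =>
    (measurable_pi_apply i).comp (hπmeas.comp measurable_fst)
  have hweight : ∀ (i : Fin d) (u : X × (Fin d → ℝ) → ℝ), Integrable u D →
      Integrable (fun p => π p.1 i * u p) D := fun i u hu =>
    hu.bdd_mul (c := 1) (hπm i).aestronglyMeasurable
      (Filter.Eventually.of_forall fun p => by
        rw [Real.norm_eq_abs, abs_of_nonneg (hπrange p.1 i).1]; exact (hπrange p.1 i).2)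
  have hcoord : ∀ i, |∫ p, π p.1 i * (p.2 i - h p.1 i) ∂D| ≤ 2 * Real.sqrt (α * M) := by
    intro i
    refine (abs_integral_mul_le_of_buckets D (M := M) (α := α) (w := w) T mid hcover hdisj hmid
      hTmeas (fun p => π p.1 i) (fun p => p.2 i - h p.1 i) (hπm i) (fun p => hπrange p.1 i)
      ((hy.eval i).sub (hh.eval i)) ?_ hwpos.le
      fun b => abs_setIntegral_le_of_cond D (hy.sub hh) (hcons i b) i).trans
      (le_of_eq (by rw [hNα, hsqrt]; ring))
    filter_upwards [hybd] with p hp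
    have h1 := (norm_le_pi_norm p.2 i).trans hp
    have h2 := (norm_le_pi_norm (h p.1) i).trans (hhbd p.1)
    exact (abs_sub _ _).trans (by rw [Real.norm_eq_abs] at h1 h2; linarith)
  have hdiff : (∫ p, (∑ i, π p.1 i * h p.1 i) ∂D) - (∫ p, (∑ i, π p.1 i * p.2 i) ∂D)
      = -∑ i, ∫ p, π p.1 i * (p.2 i - h p.1 i) ∂D := by
    rw [integral_finsetSum _ fun i _ => hweight i _ (hh.eval i),
      integral_finsetSum _ fun i _ => hweight i _ (hy.eval i), ← Finset.sum_sub_distrib,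
      ← Finset.sum_neg_distrib]
    refine Finset.sum_congr rfl fun i _ => ?_
    simp_rw [mul_sub]
    rw [integral_sub (hweight i _ (hy.eval i)) (hweight i _ (hh.eval i)), neg_sub]
  rw [hdiff, abs_neg]
  calc |∑ i, ∫ p, π p.1 i * (p.2 i - h p.1 i) ∂D|
      ≤ ∑ i, |∫ p, π p.1 i * (p.2 i - h p.1 i) ∂D| := Finset.abs_sum_le_sum_abs _ _
    _ ≤ ∑ _i : Fin d, 2 * Real.sqrt (α * M) := Finset.sum_le_sum fun i _ => hcoord i
    _ = 2 * d * Real.sqrt (α * M) := by simp; ring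
end

section
/- Let D be a distribution over X × ℝ^d with ‖y‖_∞ ≤ M almost surely. Let π : X → [0,1]^d be an arbitrary policy, let h : X → ℝ^d be a model, and let π_h : X → [0,1]^d be a policy that is pointwise optimal for h relative to π, i.e., π_h(x)·h(x) ≥ π(x)·h(x) for all x ∈ X. Suppose h is α-self-consistent (α-consistent with respect to π_h) and also α-consistent with respect to π, both for the bucketing T of width w = √(α/M). Then E_D[π_h(x)·y] ≥ E_D[π(x)·y] − 4d√(αM). -/
open MeasureTheory ProbabilityTheory

/-!
For any policy `f` with respect to whose level sets `h` is `α`-consistent, the payoff predicted by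
`h` is close to the true one, coordinate by coordinate: on the bucket `{f_i ∈ τ}` replace `f_i` by a
constant `c ∈ [0,1]` within `w/2` of it. The constant part costs at most `α` per bucket, hence
`N α = α / w = √(αM)` in total; the rounding costs at most `(w/2) · 2M = w M = √(αM)`. So
`|E[f·y] - E[f·h]| ≤ 2d√(αM)` (`abs_integral_policy_mul_le` and `abs_payoff_sub_le`). Applying this
to both `π` and `πh` and using `π·h ≤ πh·h` pointwise gives the theorem.

The constant `c` is the projection of the midpoint to `[0,1]`, since the midpoints themselves are
not assumed to lie in `[0,1]`.
-/

/-- The consistency expression `Pr[S] · ‖E[F | S]‖` equals `‖∫_S F‖`, also when `S` is null. -/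
lemma toReal_mul_norm_integral_cond {Ω E : Type*} [MeasurableSpace Ω] [NormedAddCommGroup E]
    [NormedSpace ℝ E] (D : Measure Ω) [IsProbabilityMeasure D] (S : Set Ω) (F : Ω → E) :
    (D S).toReal * ‖∫ p, F p ∂(D[|S])‖ = ‖∫ p in S, F p ∂D‖ := by
  rw [ProbabilityTheory.cond, integral_smul_measure, norm_smul, ENNReal.toReal_inv, norm_inv,
    Real.norm_of_nonneg ENNReal.toReal_nonneg]
  by_cases h0 : D S = 0
  · simp [h0, Measure.restrict_eq_zero.2 h0]
  · have : (D S).toReal ≠ 0 := ENNReal.toReal_ne_zero.2 ⟨h0, measure_ne_top _ _⟩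
    field_simp

/-- If `g` has integral at most `α` in absolute value on every bucket level set of a
`[0,1]`-valued `f`, then `∫ f g` is small: `α` per bucket plus the rounding error `w M`. -/
lemma abs_integral_policy_mul_le {Ω : Type*} [MeasurableSpace Ω]
    (D : Measure Ω) [IsProbabilityMeasure D] {M α w : ℝ} (hw : 0 ≤ w) {N : ℕ}
    {T : Fin N → Set ℝ} {mid : Fin N → ℝ}
    (hcover : Set.Icc (0 : ℝ) 1 ⊆ ⋃ b, T b)
    (hdisj : Pairwise (Function.onFun Disjoint T))
    (hmid : ∀ b, ∀ v ∈ T b, |v - mid b| ≤ w / 2)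
    (hTmeas : ∀ b, MeasurableSet (T b))
    {f g : Ω → ℝ} (hf : Measurable f) (hg : Measurable g)
    (hfr : ∀ x, f x ∈ Set.Icc (0 : ℝ) 1) (hgb : ∀ᵐ x ∂D, |g x| ≤ 2 * M)
    (hα : ∀ b, |∫ x in {x | f x ∈ T b}, g x ∂D| ≤ α) :
    |∫ x, f x * g x ∂D| ≤ N * α + w * M := by
  have hgi : Integrable g D := Integrable.of_bound hg.aestronglyMeasurable (2 * M) hgb
  have hfgi : Integrable (fun x => f x * g x) D := by
    refine hgi.bdd_mul (c := 1) hf.aestronglyMeasurable (ae_of_all _ fun x => ?_)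
    rw [Real.norm_eq_abs, abs_le]
    constructor <;> linarith [(hfr x).1, (hfr x).2]
  have hSm : ∀ b, MeasurableSet {x | f x ∈ T b} := fun b => hf (hTmeas b)
  have hSd : Pairwise (Function.onFun Disjoint fun b => {x | f x ∈ T b}) :=
    fun a b hab => (hdisj hab).preimage f
  have hSu : (⋃ b, {x | f x ∈ T b}) = Set.univ := by
    ext x
    simpa using hcover (hfr x)
  have hsplit : ∀ k : Ω → ℝ, Integrable k D →
      ∫ x, k x ∂D = ∑ b, ∫ x in {x | f x ∈ T b}, k x ∂D := by
    intro k hk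
    rw [← setIntegral_univ, ← hSu]
    exact integral_iUnion_fintype hSm hSd fun b => hk.integrableOn
  have hbucket : ∀ b, |∫ x in {x | f x ∈ T b}, f x * g x ∂D|
      ≤ α + ∫ x in {x | f x ∈ T b}, w * M ∂D := by
    intro b
    set c : ℝ := max 0 (min 1 (mid b)) with hc
    have hc0 : 0 ≤ c := le_max_left _ _
    have hc1 : c ≤ 1 := max_le zero_le_one (min_le_left _ _)
    have hrest : Integrable (fun x => f x * g x - c * g x) (D.restrict {x | f x ∈ T b}) :=
      (hfgi.sub (hgi.const_mul c)).integrableOn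
    have heq : ∫ x in {x | f x ∈ T b}, f x * g x ∂D
        = c * (∫ x in {x | f x ∈ T b}, g x ∂D)
          + ∫ x in {x | f x ∈ T b}, (f x * g x - c * g x) ∂D := by
      rw [integral_sub hfgi.integrableOn (hgi.const_mul c).integrableOn, integral_const_mul]
      ring
    have h1 : |c * (∫ x in {x | f x ∈ T b}, g x ∂D)| ≤ α := by
      rw [abs_mul, abs_of_nonneg hc0]
      exact (mul_le_of_le_one_left (abs_nonneg _) hc1).trans (hα b)
    have h2 : |∫ x in {x | f x ∈ T b}, (f x * g x - c * g x) ∂D|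
        ≤ ∫ x in {x | f x ∈ T b}, w * M ∂D := by
      refine abs_integral_le_integral_abs.trans ?_
      refine integral_mono_ae hrest.abs (integrable_const _) ?_
      filter_upwards [ae_restrict_of_ae hgb, ae_restrict_mem (hSm b)] with x hx hxT
      have hd := abs_le.1 (hmid b _ hxT)
      -- projecting the midpoint to `[0,1]` does not increase its distance to `f x ∈ [0,1]`
      have hfc : |f x - c| ≤ w / 2 := by
        have := hfr x
        rw [abs_le, hc]
        rcases max_cases 0 (min 1 (mid b)) with h | h <;>
          rcases min_cases 1 (mid b) with h' | h' <;>
          constructor <;> linarith [this.1, this.2, hd.1, hd.2]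
      calc |f x * g x - c * g x| = |f x - c| * |g x| := by rw [← abs_mul, sub_mul]
        _ ≤ w / 2 * (2 * M) := by gcongr
        _ = w * M := by ring
    rw [heq]
    exact (abs_add_le _ _).trans (add_le_add h1 h2)
  rw [hsplit _ hfgi]
  calc |∑ b, ∫ x in {x | f x ∈ T b}, f x * g x ∂D|
      ≤ ∑ b, |∫ x in {x | f x ∈ T b}, f x * g x ∂D| := Finset.abs_sum_le_sum_abs _ _
    _ ≤ ∑ b, (α + ∫ x in {x | f x ∈ T b}, w * M ∂D) := Finset.sum_le_sum fun b _ => hbucket b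
    _ = N * α + w * M := by
      rw [Finset.sum_add_distrib, ← hsplit _ (integrable_const _)]
      simp

/-- The payoff a consistent model predicts for a policy is integrable, and its mean is close to the
true expected payoff. -/
lemma abs_payoff_sub_le {X : Type*} [MeasurableSpace X] {d : ℕ}
    (D : Measure (X × (Fin d → ℝ))) [IsProbabilityMeasure D] {M α w : ℝ} (hw : 0 ≤ w) {N : ℕ}
    {T : Fin N → Set ℝ} {mid : Fin N → ℝ}
    (hcover : Set.Icc (0 : ℝ) 1 ⊆ ⋃ b, T b)
    (hdisj : Pairwise (Function.onFun Disjoint T))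
    (hmid : ∀ b, ∀ v ∈ T b, |v - mid b| ≤ w / 2)
    (hTmeas : ∀ b, MeasurableSet (T b))
    {h : X → Fin d → ℝ} (hmeas : Measurable h)
    (hhbd : ∀ x, ‖h x‖ ≤ M) (hybd : ∀ᵐ p ∂D, ‖p.2‖ ≤ M)
    {f : X → Fin d → ℝ} (hf : Measurable f)
    (hfr : ∀ x i, f x i ∈ Set.Icc (0 : ℝ) 1)
    (hcons : ∀ (i : Fin d) (b : Fin N),
      (D {p | f p.1 i ∈ T b}).toReal
        * ‖∫ p, (p.2 - h p.1) ∂(D[|{p : X × (Fin d → ℝ) | f p.1 i ∈ T b}])‖ ≤ α) :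
    Integrable (fun p => ∑ i, f p.1 i * h p.1 i) D ∧
    |(∫ p, (∑ i, f p.1 i * p.2 i) ∂D) - ∫ p, (∑ i, f p.1 i * h p.1 i) ∂D|
      ≤ d * (N * α + w * M) := by
  have hfi : ∀ i, Measurable fun p : X × (Fin d → ℝ) => f p.1 i := fun i => by fun_prop
  have hf1 : ∀ i, ∀ᵐ p ∂D, ‖f p.1 i‖ ≤ 1 := fun i => ae_of_all _ fun p => by
    rw [Real.norm_eq_abs, abs_le]
    constructor <;> linarith [(hfr p.1 i).1, (hfr p.1 i).2]
  have hyi : ∀ i, Integrable (fun p : X × (Fin d → ℝ) => p.2 i) D := fun i =>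
    Integrable.of_bound (by fun_prop) M
      (hybd.mono fun p hp => (norm_le_pi_norm p.2 i).trans hp)
  have hhi : ∀ i, Integrable (fun p : X × (Fin d → ℝ) => h p.1 i) D := fun i =>
    Integrable.of_bound (Measurable.aestronglyMeasurable (by fun_prop)) M
      (ae_of_all _ fun p => (norm_le_pi_norm (h p.1) i).trans (hhbd p.1))
  have hfy : ∀ i, Integrable (fun p : X × (Fin d → ℝ) => f p.1 i * p.2 i) D := fun i =>
    (hyi i).bdd_mul (hfi i).aestronglyMeasurable (hf1 i)
  have hfh : ∀ i, Integrable (fun p : X × (Fin d → ℝ) => f p.1 i * h p.1 i) D := fun i =>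
    (hhi i).bdd_mul (hfi i).aestronglyMeasurable (hf1 i)
  refine ⟨integrable_finsetSum _ fun i _ => hfh i, ?_⟩
  have hcoord : ∀ i, |∫ p, f p.1 i * (p.2 i - h p.1 i) ∂D| ≤ N * α + w * M := by
    intro i
    refine abs_integral_policy_mul_le D hw hcover hdisj hmid hTmeas (hfi i) (by fun_prop)
      (fun p => hfr p.1 i) ?_ fun b => ?_
    · filter_upwards [hybd] with p hp
      have h1 := (norm_le_pi_norm p.2 i).trans hp
      have h2 := (norm_le_pi_norm (h p.1) i).trans (hhbd p.1)
      rw [Real.norm_eq_abs] at h1 h2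
      linarith [abs_sub (p.2 i) (h p.1 i)]
    · have hb := hcons i b
      rw [toReal_mul_norm_integral_cond] at hb
      have he : (∫ p in {p : X × (Fin d → ℝ) | f p.1 i ∈ T b}, (p.2 - h p.1) ∂D) i
          = ∫ p in {p : X × (Fin d → ℝ) | f p.1 i ∈ T b}, (p.2 i - h p.1 i) ∂D :=
        eval_integral (f := fun p : X × (Fin d → ℝ) => p.2 - h p.1)
          (fun j => ((hyi j).sub (hhi j)).integrableOn) i
      rw [← he]
      exact (norm_le_pi_norm _ i).trans hb
  rw [integral_finsetSum _ fun i _ => hfy i, integral_finsetSum _ fun i _ => hfh i,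
    ← Finset.sum_sub_distrib]
  refine (Finset.abs_sum_le_sum_abs _ _).trans ?_
  refine (Finset.sum_le_sum (g := fun _ => N * α + w * M) fun i _ => ?_).trans (by simp [mul_add])
  rw [← integral_sub (hfy i) (hfh i)]
  simpa only [mul_sub] using hcoord i

/-- If a model `h` is `α`-self-consistent (consistent with respect to its own policy
`πh`, which is pointwise optimal for `h` relative to `π`) and also `α`-consistent with
respect to an arbitrary policy `π`, for a bucketing `T` of `[0,1]` into buckets of width
`w = √(α/M)`, then the policy `πh` induced by `h` obtains payoff at least that of `π`,
up to error: `E[πh(x)·y] ≥ E[π(x)·y] − 4d√(αM)`. -/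
theorem consistent_policy_comparison
    {X : Type*} [MeasurableSpace X] {d : ℕ}
    (D : Measure (X × (Fin d → ℝ))) [IsProbabilityMeasure D]
    (M α w : ℝ) (hM : 0 < M) (hα : 0 < α)
    (hw : w = Real.sqrt (α / M)) (hw1 : w ≤ 1)
    (N : ℕ) (hNw : (N : ℝ) * w = 1)
    (T : Fin N → Set ℝ) (mid : Fin N → ℝ)
    (hcover : Set.Icc (0 : ℝ) 1 ⊆ ⋃ b, T b)
    (hdisj : Pairwise (Function.onFun Disjoint T))
    (hmid : ∀ b, ∀ v ∈ T b, |v - mid b| ≤ w / 2)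
    (hTmeas : ∀ b, MeasurableSet (T b))
    (h : X → Fin d → ℝ) (hmeas : Measurable h)
    (hhbd : ∀ x, ‖h x‖ ≤ M) (hybd : ∀ᵐ p ∂D, ‖p.2‖ ≤ M)
    (π : X → Fin d → ℝ) (hπmeas : Measurable π)
    (hπrange : ∀ x i, π x i ∈ Set.Icc (0 : ℝ) 1)
    (πh : X → Fin d → ℝ) (hπhmeas : Measurable πh)
    (hπhrange : ∀ x i, πh x i ∈ Set.Icc (0 : ℝ) 1)
    (hopt : ∀ x, (∑ i, π x i * h x i) ≤ ∑ i, πh x i * h x i)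
    (hselfcons : ∀ (i : Fin d) (b : Fin N),
      (D {p | πh p.1 i ∈ T b}).toReal
        * ‖∫ p, (p.2 - h p.1) ∂(D[|{p : X × (Fin d → ℝ) | πh p.1 i ∈ T b}])‖ ≤ α)
    (hcons : ∀ (i : Fin d) (b : Fin N),
      (D {p | π p.1 i ∈ T b}).toReal
        * ‖∫ p, (p.2 - h p.1) ∂(D[|{p : X × (Fin d → ℝ) | π p.1 i ∈ T b}])‖ ≤ α) :
    (∫ p, (∑ i, πh p.1 i * p.2 i) ∂D)
      ≥ (∫ p, (∑ i, π p.1 i * p.2 i) ∂D) - 4 * d * Real.sqrt (α * M) := by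
  have hw0 : 0 ≤ w := hw ▸ Real.sqrt_nonneg _
  have hwM : w * M = Real.sqrt (α * M) := by
    rw [hw, eq_comm, Real.sqrt_eq_iff_mul_self_eq (by positivity) (by positivity)]
    have := Real.mul_self_sqrt (show 0 ≤ α / M by positivity)
    symm
    calc Real.sqrt (α / M) * M * (Real.sqrt (α / M) * M)
        = Real.sqrt (α / M) * Real.sqrt (α / M) * (M * M) := by ring
      _ = α * M := by rw [this]; field_simp
  have hNα : N * α = w * M := by
    have hα' : α = w * w * M := by
      rw [hw, Real.mul_self_sqrt (by positivity)]
      field_simp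
    calc N * α = N * w * (w * M) := by rw [hα']; ring
      _ = w * M := by rw [hNw, one_mul]
  obtain ⟨hi, hA⟩ := abs_payoff_sub_le D hw0 hcover hdisj hmid hTmeas hmeas hhbd hybd
    hπmeas hπrange hcons
  obtain ⟨hi', hB⟩ := abs_payoff_sub_le D hw0 hcover hdisj hmid hTmeas hmeas hhbd hybd
    hπhmeas hπhrange hselfcons
  have hO := integral_mono hi hi' fun p => hopt p.1
  rw [hNα, hwM] at hA hB
  have h1 := (abs_le.1 hA).2
  have h2 := (abs_le.1 hB).1
  linarith
end

section
/- Let D be a distribution over X × ℝ^d with ‖y‖_∞ ≤ M almost surely. Let h_1, …, h_k : X → ℝ^d be k models with associated policies π_1, …, π_k : X → [0,1]^d, and let i* : X → [k] be a measurable selector of a model with maximum self-assessed payoff: π_{i*(x)}(x)·h_{i*(x)}(x) ≥ π_j(x)·h_j(x) for all j ∈ [k] and all x. Let the ensemble policy be π_𝐡(x) = π_{i*(x)}(x) and the ensemble self-evaluation at x be π_{i*(x)}(x)·h_{i*(x)}(x). Suppose for every i, l ∈ [k], every coordinate j ∈ [d], and every bucket τ in the bucketing T of width w (0 < w ≤ 1,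 1/w an integer), the model h_i is α-consistent with respect to the event {x : π_i(x)_j ∈ τ and i*(x) = l}. Then E_D[π_𝐡(x)·y] ≥ E_D[π_{i*(x)}(x)·h_{i*(x)}(x)] − αkd/w − wMd. -/
open MeasureTheory ProbabilityTheory

/-!
Write the difference of the two expectations as a sum over coordinates `j` of the expectations of
`π (i* x) x j * (y j - h (i* x) x j)`. The events `{π l x j ∈ T b, i* x = l}`, over `l` and `b`,
partition the space. On each of them the policy coordinate is within `w / 2` of the midpoint of
bucket `b`; replacing it by that midpoint costs at most `(w / 2) * (2 M) = w M` per coordinate, since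
`|y j - h j| ≤ 2 M` (`coordinate_pointwise`). After the replacement, each of the `k N = k / w` events
contributes a constant in `[0, 1]` times an integral which consistency bounds by `α`
(`setIntegral_coord_abs_le`).

The bucket midpoints are not assumed to lie in `[0, 1]`, so they are first projected to `[0, 1]`;
this does not increase their distance to policy values.
-/

/-- Projecting `m` to `[0, 1]` does not increase its distance to a point of `[0, 1]`. -/
lemma abs_sub_clamp_le {v m : ℝ} (hv : v ∈ Set.Icc (0 : ℝ) 1) :
    |v - max 0 (min 1 m)| ≤ |v - m| := by
  obtain ⟨h0, h1⟩ := hv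
  rcases le_total 1 m with h | h
  · rw [min_eq_left h, max_eq_right zero_le_one, abs_of_nonpos (by linarith),
      abs_of_nonpos (by linarith)]
    linarith
  · rw [min_eq_right h]
    rcases le_total 0 m with h' | h'
    · rw [max_eq_right h']
    · rw [max_eq_left h', abs_of_nonneg (by linarith), abs_of_nonneg (by linarith)]
      linarith

lemma integral_cond_smul {Ω : Type*} [MeasurableSpace Ω] {d : ℕ} (D : Measure Ω)
    [IsProbabilityMeasure D] (E : Set Ω) (f : Ω → Fin d → ℝ) :
    (D E).toReal • ∫ p, f p ∂(D[|E]) = ∫ p in E, f p ∂D := by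
  rw [ProbabilityTheory.cond, integral_smul_measure, smul_smul, ENNReal.toReal_inv]
  by_cases hE : D E = 0
  · simp [Measure.restrict_eq_zero.2 hE]
  · rw [mul_inv_cancel₀ (ENNReal.toReal_ne_zero.2 ⟨hE, measure_ne_top _ _⟩), one_smul]

/-- Consistency on `E` bounds every coordinate of the unnormalized integral over `E`. -/
lemma setIntegral_coord_abs_le {Ω : Type*} [MeasurableSpace Ω] {d : ℕ} (D : Measure Ω)
    [IsProbabilityMeasure D] (E : Set Ω) (f : Ω → Fin d → ℝ) (hf : Integrable f D) {α : ℝ}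
    (hα : (D E).toReal * ‖∫ p, f p ∂(D[|E])‖ ≤ α) (j : Fin d) :
    |∫ p in E, f p j ∂D| ≤ α := by
  have h1 : (∫ p in E, f p ∂D) j = ∫ p in E, f p j ∂D :=
    eval_integral (fun i => (Integrable.eval hf i).integrableOn) j
  rw [← h1, ← Real.norm_eq_abs]
  refine (norm_le_pi_norm _ j).trans ?_
  rw [← integral_cond_smul, norm_smul, Real.norm_of_nonneg ENNReal.toReal_nonneg]
  exact hα

/-- Pointwise form of the discretization step, at a point with selected index `s` and policy
values `v l`: summing over the indicators of the cells `(l, b)` picks out the single term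
`l = s`, `b` the bucket of `v s`. -/
lemma coordinate_pointwise {k N : ℕ} {M w : ℝ} (T : Fin N → Set ℝ) (c : Fin N → ℝ)
    (hcover : Set.Icc (0 : ℝ) 1 ⊆ ⋃ b, T b) (hdisj : Pairwise (Function.onFun Disjoint T))
    (hc : ∀ b, ∀ v ∈ T b, v ∈ Set.Icc (0 : ℝ) 1 → |v - c b| ≤ w / 2)
    (s : Fin k) (v u : Fin k → ℝ) (hv : ∀ l, v l ∈ Set.Icc (0 : ℝ) 1)
    (hu : |u s| ≤ 2 * M) [∀ l b, Decidable (v l ∈ T b ∧ s = l)] :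
    (∑ l, ∑ b, if v l ∈ T b ∧ s = l then c b * u l else 0) - w * M ≤ v s * u s := by
  obtain ⟨b₀, hb₀⟩ := Set.mem_iUnion.1 (hcover (hv s))
  have hsum : (∑ l, ∑ b, if v l ∈ T b ∧ s = l then c b * u l else 0) = c b₀ * u s := by
    rw [Finset.sum_eq_single s, Finset.sum_eq_single b₀]
    · simp [hb₀]
    · intro b _ hb
      rw [if_neg]
      rintro ⟨h1, -⟩
      exact Set.disjoint_left.1 (hdisj hb) h1 hb₀
    · simp
    · intro l _ hl
      exact Finset.sum_eq_zero fun b _ => if_neg fun h => hl h.2.symm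
    · simp
  have h1 := hc b₀ _ hb₀ (hv s)
  have h2 : |(v s - c b₀) * u s| ≤ w / 2 * (2 * M) := by
    rw [abs_mul]
    exact mul_le_mul h1 hu (abs_nonneg _) ((abs_nonneg _).trans h1)
  have h3 := neg_le_of_abs_le h2
  rw [hsum]
  linarith

/-- White box ensemble self-consistency (general bucket width): if each constituent model
`h i` is `α`-consistent with respect to each event `{x | π i x j ∈ τ ∧ i*(x) = l}`
(level sets of its own policy intersected with the maximum-self-assessment level sets),
then the expected payoff of the ensemble policy `x ↦ π (i* x) x` is at least its expected
self-evaluation minus `αkd/w + wMd`. -/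
theorem white_box_ensemble_self_consistent
    {X : Type*} [MeasurableSpace X] {d k : ℕ}
    (D : Measure (X × (Fin d → ℝ))) [IsProbabilityMeasure D]
    (M α w : ℝ) (hM : 0 < M)
    (hw : 0 < w) (hw1 : w ≤ 1)
    (N : ℕ) (hNw : (N : ℝ) * w = 1)
    (T : Fin N → Set ℝ) (mid : Fin N → ℝ)
    (hcover : Set.Icc (0 : ℝ) 1 ⊆ ⋃ b, T b)
    (hdisj : Pairwise (Function.onFun Disjoint T))
    (hmid : ∀ b, ∀ v ∈ T b, |v - mid b| ≤ w / 2)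
    (hTmeas : ∀ b, MeasurableSet (T b))
    (h : Fin k → X → Fin d → ℝ) (hmeas : ∀ i, Measurable (h i))
    (hhbd : ∀ i x, ‖h i x‖ ≤ M) (hybd : ∀ᵐ p ∂D, ‖p.2‖ ≤ M)
    (π : Fin k → X → Fin d → ℝ) (hπmeas : ∀ i, Measurable (π i))
    (hπrange : ∀ i x j, π i x j ∈ Set.Icc (0 : ℝ) 1)
    (istar : X → Fin k) (histar : Measurable istar)
    (hsel : ∀ x (j : Fin k),
      (∑ i, π j x i * h j x i) ≤ ∑ i, π (istar x) x i * h (istar x) x i)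
    (hcons : ∀ (i l : Fin k) (j : Fin d) (b : Fin N),
      (D {p | π i p.1 j ∈ T b ∧ istar p.1 = l}).toReal
        * ‖∫ p, (p.2 - h i p.1)
            ∂(D[|{p : X × (Fin d → ℝ) | π i p.1 j ∈ T b ∧ istar p.1 = l}])‖ ≤ α) :
    (∫ p, (∑ i, π (istar p.1) p.1 i * p.2 i) ∂D)
      ≥ (∫ p, (∑ i, π (istar p.1) p.1 i * h (istar p.1) p.1 i) ∂D)
          - α * k * d / w - w * M * d := by
  classical
  have hsel_meas {f : Fin k → X → Fin d → ℝ} (hf : ∀ i, Measurable (f i)) :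
      Measurable fun x => f (istar x) x := by
    have : Measurable fun q : Fin k × X => f q.1 q.2 := measurable_from_prod_countable_right hf
    exact this.comp (histar.prodMk measurable_id)
  have hπs := hsel_meas hπmeas
  have hhs := hsel_meas hmeas
  have hy_int : Integrable (fun p : X × (Fin d → ℝ) => p.2) D :=
    Integrable.of_bound measurable_snd.aestronglyMeasurable M hybd
  have hh_int (i : Fin k) : Integrable (fun p : X × (Fin d → ℝ) => h i p.1) D :=
    Integrable.of_bound ((hmeas i).comp measurable_fst).aestronglyMeasurable M
      (ae_of_all _ fun p => hhbd i p.1)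
  have hhs_int : Integrable (fun p : X × (Fin d → ℝ) => h (istar p.1) p.1) D :=
    Integrable.of_bound (hhs.comp measurable_fst).aestronglyMeasurable M
      (ae_of_all _ fun p => hhbd _ p.1)
  have hmul_int {f : X × (Fin d → ℝ) → Fin d → ℝ} (hf : Integrable f D) (j : Fin d) :
      Integrable (fun p => π (istar p.1) p.1 j * f p j) D := by
    refine Integrable.bdd_mul (c := 1) (Integrable.eval hf j)
      (((measurable_pi_apply j).comp hπs).comp measurable_fst).aestronglyMeasurable
      (ae_of_all _ fun p => ?_)
    have := hπrange (istar p.1) p.1 j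
    rw [Real.norm_of_nonneg this.1]
    exact this.2
  set c : Fin N → ℝ := fun b => max 0 (min 1 (mid b))
  have hc_abs (b : Fin N) : |c b| ≤ 1 := by
    rw [abs_of_nonneg (le_max_left _ _)]
    exact max_le zero_le_one (min_le_left _ _)
  have hc (b : Fin N) (v : ℝ) (hv : v ∈ T b) (hv' : v ∈ Set.Icc (0 : ℝ) 1) :
      |v - c b| ≤ w / 2 := (abs_sub_clamp_le hv').trans (hmid b v hv)
  have hcoord (j : Fin d) :
      -(α * k * N) - w * M
        ≤ ∫ p, π (istar p.1) p.1 j * (p.2 - h (istar p.1) p.1) j ∂D := by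
    set E : Fin k → Fin N → Set (X × (Fin d → ℝ)) :=
      fun l b => {p | π l p.1 j ∈ T b ∧ istar p.1 = l} with hE_def
    have hE (l : Fin k) (b : Fin N) : MeasurableSet (E l b) :=
      ((((measurable_pi_apply j).comp (hπmeas l)).comp measurable_fst) (hTmeas b)).inter
        ((histar.comp measurable_fst) (measurableSet_singleton l))
    have hterm_int (l : Fin k) (b : Fin N) :
        Integrable ((E l b).indicator fun p => c b * (p.2 - h l p.1) j) D :=
      ((Integrable.eval (hy_int.sub (hh_int l)) j).const_mul (c b)).indicator (hE l b)
    have hsum_int : Integrable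
        (fun p => ∑ l, ∑ b, (E l b).indicator (fun p => c b * (p.2 - h l p.1) j) p) D :=
      integrable_finsetSum _ fun l _ => integrable_finsetSum _ fun b _ => hterm_int l b
    have hterm (l : Fin k) (b : Fin N) :
        -α ≤ ∫ p, (E l b).indicator (fun p => c b * (p.2 - h l p.1) j) p ∂D := by
      rw [integral_indicator (hE l b), integral_const_mul]
      have h1 := setIntegral_coord_abs_le D (E l b) (fun p => p.2 - h l p.1)
        (hy_int.sub (hh_int l)) (hcons l l j b) j
      refine neg_le_of_abs_le ?_
      rw [abs_mul]
      exact (mul_le_of_le_one_left (abs_nonneg _) (hc_abs b)).trans h1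
    calc -(α * k * N) - w * M
        = (∑ _l : Fin k, ∑ _b : Fin N, -α) - w * M := by simp; ring
      _ ≤ (∑ l, ∑ b, ∫ p, (E l b).indicator (fun p => c b * (p.2 - h l p.1) j) p ∂D)
            - w * M := by
          gcongr with l _ b _
          exact hterm l b
      _ = ∫ p, ((∑ l, ∑ b, (E l b).indicator (fun p => c b * (p.2 - h l p.1) j) p)
            - w * M) ∂D := by
          rw [integral_sub hsum_int (integrable_const _), integral_finsetSum _
            fun l _ => integrable_finsetSum _ fun b _ => hterm_int l b]
          simp_rw [integral_finsetSum _ fun b _ => hterm_int _ b]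
          simp
      _ ≤ _ := by
          refine integral_mono_ae (hsum_int.sub (integrable_const _))
            (hmul_int (hy_int.sub hhs_int) j) ?_
          filter_upwards [hybd] with p hp
          have hu : |(p.2 - h (istar p.1) p.1) j| ≤ 2 * M := by
            rw [← Real.norm_eq_abs]
            refine (norm_le_pi_norm _ j).trans ((norm_sub_le _ _).trans ?_)
            linarith [hhbd (istar p.1) p.1]
          have := coordinate_pointwise T c hcover hdisj hc (istar p.1)
            (fun l => π l p.1 j) (fun l => (p.2 - h l p.1) j) (fun l => hπrange l p.1 j) hu
          simpa only [Set.indicator_apply, hE_def, Set.mem_ofPred_eq] using this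
  have hN : (N : ℝ) = 1 / w := by
    rw [eq_div_iff hw.ne']
    exact hNw
  have hdiff : (∫ p, (∑ i, π (istar p.1) p.1 i * p.2 i) ∂D)
      - (∫ p, (∑ i, π (istar p.1) p.1 i * h (istar p.1) p.1 i) ∂D)
      = ∑ j, ∫ p, π (istar p.1) p.1 j * (p.2 - h (istar p.1) p.1) j ∂D := by
    rw [integral_finsetSum _ fun j _ => hmul_int hy_int j,
      integral_finsetSum _ fun j _ => hmul_int hhs_int j, ← Finset.sum_sub_distrib]
    refine Finset.sum_congr rfl fun j _ => ?_
    rw [← integral_sub (hmul_int hy_int j) (hmul_int hhs_int j)]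
    simp only [Pi.sub_apply, mul_sub]
  have hlow := Finset.sum_le_sum fun (j : Fin d) (_ : j ∈ Finset.univ) => hcoord j
  rw [← hdiff, Finset.sum_const, Finset.card_univ, Fintype.card_fin, nsmul_eq_mul, hN] at hlow
  have hrw : (d : ℝ) * (-(α * k * (1 / w)) - w * M) = - (α * k * d / w) - w * M * d := by ring
  linarith
end

section
/- Let D be a distribution over X × ℝ^d with ‖y‖_∞ ≤ M almost surely. Let h_1, …, h_k : X → ℝ^d be k models with associated policies π_1, …, π_k : X → [0,1]^d, and let i* : X → [k] be a measurable selector with π_{i*(x)}(x)·h_{i*(x)}(x) ≥ π_j(x)·h_j(x) for all j ∈ [k] and all x; let the ensemble policy be π_𝐡(x) = π_{i*(x)}(x). Suppose for every i, l ∈ [k], every coordinate j ∈ [d], and every bucket τ in the bucketing T of width w = √(αk/M), the model h_i is α-consistent with respect to the event {x : π_i(x)_j ∈ τ and i*(x) = l}. Then the expected payoff of the ensemble is close to its expected self-evaluation: E_D[π_𝐡(x)·y] ≥ E_D[π_{i*(x)}(x)·h_{i*(x)}(x)] − 2d√(αkM). -/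
open MeasureTheory ProbabilityTheory

/-!
The gap between payoff and self-evaluation splits over coordinates, so it suffices to bound
`E[q g]` by `2 √(αkM)` in absolute value, where `q = π_{i*(x)}(x)_j` and
`g = y_j - h_{i*(x)}(x)_j`. The events `{i* = l, π_l(x)_j ∈ τ}` partition the space into `kN` cells,
`N = 1/w`. On each cell `q` is within `w/2` of a constant in `[0,1]`. Replacing `q` by this constant
costs at most `(w/2)(2M)` in total, and consistency bounds what remains by `α` per cell. This gives
`kα/w + wM`, which equals `2 √(αkM)` for `w = √(αk/M)` (`abs_integral_mul_le_of_cells`).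
The bucket midpoints are not assumed to lie in `[0,1]`; clamping them there only moves them closer
to the values of the policies.
-/

/-- On a finite measurable partition whose cells each see `q` nearly constant and `g` nearly
centred, the integral of `q * g` is small: `α` per cell, plus the discretization error. -/
lemma abs_integral_mul_le_of_cells {Ω β : Type*} [MeasurableSpace Ω] [Fintype β]
    (D : Measure Ω) [IsProbabilityMeasure D] {M α w : ℝ}
    (C : β → Set Ω) (hC : ∀ c, MeasurableSet (C c))
    (hdisj : Pairwise (Function.onFun Disjoint C)) (hcov : ⋃ c, C c = Set.univ)
    (q g : Ω → ℝ) (hg : Integrable g D) (hqg : Integrable (fun p => q p * g p) D)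
    (hgM : ∀ᵐ p ∂D, |g p| ≤ 2 * M) (hw : 0 ≤ w)
    (m : β → ℝ) (hm : ∀ c, |m c| ≤ 1) (hqm : ∀ c, ∀ p ∈ C c, |q p - m c| ≤ w / 2)
    (hα : ∀ c, |∫ p in C c, g p ∂D| ≤ α) :
    |∫ p, q p * g p ∂D| ≤ Fintype.card β * α + w * M := by
  have hcell : ∀ c, |∫ p in C c, q p * g p ∂D| ≤ α + w * M * D.real (C c) := by
    intro c
    have hsplit : ∫ p in C c, q p * g p ∂D
        = m c * ∫ p in C c, g p ∂D + ∫ p in C c, (q p - m c) * g p ∂D := by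
      have hint : Integrable (fun p => (q p - m c) * g p) (D.restrict (C c)) := by
        have := (hqg.sub (hg.const_mul (m c))).restrict (s := C c)
        refine this.congr (Filter.Eventually.of_forall fun p => ?_)
        simp only [Pi.sub_apply]
        ring
      rw [← integral_const_mul, ← integral_add (hg.restrict.const_mul _) hint]
      congr 1
      ext p
      ring
    have herr : ‖∫ p in C c, (q p - m c) * g p ∂D‖ ≤ w * M * D.real (C c) := by
      refine norm_setIntegral_le_of_norm_le_const_ae' (measure_lt_top _ _) ?_
      filter_upwards [hgM] with p hp hpc
      rw [Real.norm_eq_abs, abs_mul]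
      calc |q p - m c| * |g p| ≤ (w / 2) * (2 * M) :=
            mul_le_mul (hqm c p hpc) hp (abs_nonneg _) (by positivity)
        _ = w * M := by ring
    rw [hsplit]
    refine (abs_add_le _ _).trans (add_le_add ?_ herr)
    rw [abs_mul]
    exact (mul_le_of_le_one_left (abs_nonneg _) (hm c)).trans (hα c)
  have hsum : ∑ c, D.real (C c) = 1 := by
    have := measureReal_iUnion_fintype (μ := D) hdisj hC
    rw [← this, hcov]
    simp
  have hI : ∫ p, q p * g p ∂D = ∑ c, ∫ p in C c, q p * g p ∂D := by
    rw [← integral_iUnion_fintype hC hdisj (fun c => hqg.integrableOn), hcov,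
      Measure.restrict_univ]
  rw [hI]
  calc |∑ c, ∫ p in C c, q p * g p ∂D| ≤ ∑ c, |∫ p in C c, q p * g p ∂D| :=
        Finset.abs_sum_le_sum_abs _ _
    _ ≤ ∑ c, (α + w * M * D.real (C c)) := Finset.sum_le_sum fun c _ => hcell c
    _ = Fintype.card β * α + w * M := by
        rw [Finset.sum_add_distrib, ← Finset.mul_sum, hsum]
        simp

/-- Clears the conditional measure from `α`-consistency. It also holds for null events, where
both sides vanish. -/
lemma measure_toReal_smul_integral_cond {Ω E : Type*} [MeasurableSpace Ω]
    [NormedAddCommGroup E] [NormedSpace ℝ E] (D : Measure Ω) [IsFiniteMeasure D]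
    (s : Set Ω) (f : Ω → E) :
    (D s).toReal • ∫ p, f p ∂(D[|s]) = ∫ p in s, f p ∂D := by
  rw [ProbabilityTheory.cond, integral_smul_measure, smul_smul, ENNReal.toReal_inv]
  by_cases h0 : D s = 0
  · simp [h0, Measure.restrict_eq_zero.mpr h0]
  · rw [mul_inv_cancel₀ (ENNReal.toReal_ne_zero.mpr ⟨h0, measure_ne_top _ _⟩), one_smul]

lemma bucket_error_eq {α M w : ℝ} {k N : ℕ} (hM : 0 < M) (hα : 0 < α)
    (hw : w = Real.sqrt (α * k / M)) (hNw : (N : ℝ) * w = 1) :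
    (k : ℝ) * N * α + w * M = 2 * Real.sqrt (α * k * M) := by
  have hs : Real.sqrt (α * k * M) = w * M := by
    rw [show α * k * M = (α * k / M) * M ^ 2 by field_simp, Real.sqrt_mul (by positivity),
      Real.sqrt_sq hM.le, hw]
  have hw2 : w ^ 2 * M = α * k := by
    rw [hw, Real.sq_sqrt (by positivity)]
    field_simp
  rw [hs]
  linear_combination (-(N : ℝ)) * hw2 + w * M * hNw

/-- White box ensemble self-consistency: with bucket width `w = √(αk/M)`, if each
constituent model `h i` is `α`-consistent with respect to each event
`{x | π i x j ∈ τ ∧ i*(x) = l}`, then the expected payoff of the ensemble policy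
`x ↦ π (i* x) x` is at least its expected self-evaluation minus `2d√(αkM)`. -/
theorem white_box_ensemble_self_consistent_sqrt
    {X : Type*} [MeasurableSpace X] {d k : ℕ}
    (D : Measure (X × (Fin d → ℝ))) [IsProbabilityMeasure D]
    (M α w : ℝ) (hM : 0 < M) (hα : 0 < α)
    (hw : w = Real.sqrt (α * k / M)) (hw1 : w ≤ 1)
    (N : ℕ) (hNw : (N : ℝ) * w = 1)
    (T : Fin N → Set ℝ) (mid : Fin N → ℝ)
    (hcover : Set.Icc (0 : ℝ) 1 ⊆ ⋃ b, T b)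
    (hdisj : Pairwise (Function.onFun Disjoint T))
    (hmid : ∀ b, ∀ v ∈ T b, |v - mid b| ≤ w / 2)
    (hTmeas : ∀ b, MeasurableSet (T b))
    (h : Fin k → X → Fin d → ℝ) (hmeas : ∀ i, Measurable (h i))
    (hhbd : ∀ i x, ‖h i x‖ ≤ M) (hybd : ∀ᵐ p ∂D, ‖p.2‖ ≤ M)
    (π : Fin k → X → Fin d → ℝ) (hπmeas : ∀ i, Measurable (π i))
    (hπrange : ∀ i x j, π i x j ∈ Set.Icc (0 : ℝ) 1)
    (istar : X → Fin k) (histar : Measurable istar)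
    (hsel : ∀ x (j : Fin k),
      (∑ i, π j x i * h j x i) ≤ ∑ i, π (istar x) x i * h (istar x) x i)
    (hcons : ∀ (i l : Fin k) (j : Fin d) (b : Fin N),
      (D {p | π i p.1 j ∈ T b ∧ istar p.1 = l}).toReal
        * ‖∫ p, (p.2 - h i p.1)
            ∂(D[|{p : X × (Fin d → ℝ) | π i p.1 j ∈ T b ∧ istar p.1 = l}])‖ ≤ α) :
    (∫ p, (∑ i, π (istar p.1) p.1 i * p.2 i) ∂D)
      ≥ (∫ p, (∑ i, π (istar p.1) p.1 i * h (istar p.1) p.1 i) ∂D)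
          - 2 * d * Real.sqrt (α * k * M) := by
  have hw0 : 0 ≤ w := hw ▸ Real.sqrt_nonneg _
  have hsel_meas : ∀ (f : Fin k → X → Fin d → ℝ), (∀ i, Measurable (f i)) → ∀ j,
      Measurable (fun p : X × (Fin d → ℝ) => f (istar p.1) p.1 j) := by
    intro f hf j
    have h1 : Measurable (fun z : X × Fin k => f z.2 z.1 j) :=
      measurable_from_prod_countable_left fun i => (measurable_pi_apply j).comp (hf i)
    exact h1.comp (measurable_fst.prodMk (histar.comp measurable_fst))
  have hπm := hsel_meas π hπmeas
  have hhm := hsel_meas h hmeas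
  have hym : ∀ j, Measurable (fun p : X × (Fin d → ℝ) => p.2 j) :=
    fun j => (measurable_pi_apply j).comp measurable_snd
  have hyb : ∀ j, ∀ᵐ p ∂D, |p.2 j| ≤ M := fun j => by
    filter_upwards [hybd] with p hp using (norm_le_pi_norm p.2 j).trans hp
  have hhb : ∀ i x j, |h i x j| ≤ M := fun i x j => (norm_le_pi_norm (h i x) j).trans (hhbd i x)
  have hyint : ∀ j, Integrable (fun p : X × (Fin d → ℝ) => p.2 j) D := fun j =>
    Integrable.of_bound (hym j).aestronglyMeasurable M (hyb j)
  have hhint : ∀ j, Integrable (fun p : X × (Fin d → ℝ) => h (istar p.1) p.1 j) D := fun j =>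
    Integrable.of_bound (hhm j).aestronglyMeasurable M
      (Filter.Eventually.of_forall fun p => hhb _ _ _)
  have hπb : ∀ j, ∀ᵐ p ∂D, ‖π (istar p.1) p.1 j‖ ≤ 1 := fun j =>
    Filter.Eventually.of_forall fun p => by
      obtain ⟨h0, h1⟩ := hπrange (istar p.1) p.1 j
      rwa [Real.norm_eq_abs, abs_of_nonneg h0]
  have hπy : ∀ j, Integrable (fun p => π (istar p.1) p.1 j * p.2 j) D := fun j =>
    (hyint j).bdd_mul (hπm j).aestronglyMeasurable (hπb j)
  have hπh : ∀ j, Integrable (fun p => π (istar p.1) p.1 j * h (istar p.1) p.1 j) D := fun j =>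
    (hhint j).bdd_mul (hπm j).aestronglyMeasurable (hπb j)
  have hcoord : ∀ j, |∫ p, π (istar p.1) p.1 j * (p.2 j - h (istar p.1) p.1 j) ∂D|
      ≤ 2 * Real.sqrt (α * k * M) := by
    intro j
    let C : Fin k × Fin N → Set (X × (Fin d → ℝ)) :=
      fun c => {p | π c.1 p.1 j ∈ T c.2 ∧ istar p.1 = c.1}
    have hC : ∀ c, MeasurableSet (C c) := fun c =>
      ((((measurable_pi_apply j).comp (hπmeas c.1)).comp measurable_fst) (hTmeas c.2)).inter
        ((histar.comp measurable_fst) (measurableSet_singleton c.1))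
    have key := abs_integral_mul_le_of_cells D (M := M) (α := α) (w := w) C hC ?_ ?_
      (fun p => π (istar p.1) p.1 j) (fun p => p.2 j - h (istar p.1) p.1 j)
      ((hyint j).sub (hhint j)) ?_ ?_ hw0 (fun c => max 0 (min 1 (mid c.2))) ?_ ?_ ?_
    · simp only [Fintype.card_prod, Fintype.card_fin, Nat.cast_mul] at key
      rwa [bucket_error_eq hM hα hw hNw] at key
    · rintro ⟨l, b⟩ ⟨l', b'⟩ hne
      refine Set.disjoint_left.mpr ?_
      rintro p ⟨hp1, hp2⟩ ⟨hp3, hp4⟩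
      simp only at hp1 hp2 hp3 hp4
      obtain rfl : l = l' := hp2.symm.trans hp4
      have hb : b ≠ b' := fun hb => hne (by rw [hb])
      exact Set.disjoint_left.mp (hdisj hb) hp1 hp3
    · refine Set.eq_univ_of_forall fun p => ?_
      obtain ⟨b, hb⟩ := Set.mem_iUnion.mp (hcover (hπrange (istar p.1) p.1 j))
      exact Set.mem_iUnion.mpr ⟨(istar p.1, b), hb, rfl⟩
    · exact ((hyint j).sub (hhint j)).bdd_mul (hπm j).aestronglyMeasurable (hπb j)
    · filter_upwards [hyb j] with p hp
      have := abs_sub (p.2 j) (h (istar p.1) p.1 j)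
      linarith [hhb (istar p.1) p.1 j]
    · intro c
      rw [abs_of_nonneg (le_max_left _ _)]
      exact max_le zero_le_one (min_le_left _ _)
    · rintro ⟨l, b⟩ p ⟨hp1, hp2⟩
      simp only at hp1 hp2
      rw [← hp2] at hp1
      exact (abs_sub_clamp_le (hπrange _ _ _)).trans (hmid b _ hp1)
    · rintro ⟨l, b⟩
      have hlint : ∀ i, Integrable (fun p : X × (Fin d → ℝ) => (p.2 - h l p.1) i) D := fun i =>
        (hyint i).sub (Integrable.of_bound
          (((measurable_pi_apply i).comp (hmeas l)).comp measurable_fst).aestronglyMeasurable M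
          (Filter.Eventually.of_forall fun p => hhb _ _ _))
      have hc := hcons l l j b
      rw [← abs_of_nonneg (ENNReal.toReal_nonneg (a := D _)), ← Real.norm_eq_abs, ← norm_smul,
        measure_toReal_smul_integral_cond] at hc
      refine le_trans ?_ ((norm_le_pi_norm _ j).trans hc)
      rw [eval_integral fun i => (hlint i).restrict, Real.norm_eq_abs]
      refine le_of_eq (congrArg _ (setIntegral_congr_fun (hC (l, b)) ?_))
      rintro p ⟨_, hp⟩
      simp only at hp
      simp [hp]
  rw [ge_iff_le, sub_le_iff_le_add, ← sub_le_iff_le_add',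
    integral_finsetSum _ fun j _ => hπy j, integral_finsetSum _ fun j _ => hπh j,
    ← Finset.sum_sub_distrib]
  calc _ ≤ ∑ _j : Fin d, 2 * Real.sqrt (α * k * M) := by
        refine Finset.sum_le_sum fun j _ => ?_
        have hj := neg_le_of_abs_le (hcoord j)
        simp only [mul_sub] at hj
        rw [integral_sub (hπy j) (hπh j)] at hj
        linarith
    _ = 2 * d * Real.sqrt (α * k * M) := by
        simp
        ring
end
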